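/- arXiv:1112.5015 — 3 statements merged into one kernel-verified Lean document; each statement's English description precedes it below -/
import Mathlib

section
/- Let K be a field of characteristic 0, let A be a Cohen-Macaulay standard graded K-algebra of Krull dimension d, let Θ = θ_1,…,θ_d be a linear system of parameters for A, let r ≥ 1 be an integer and set s = ⌊(r−1)d/r⌋. Then the Artinian algebra A_Θ^⟨r⟩ has the s-Lefschetz property; in fact w = (θ_1 + ⋯ + θ_d)^r is an s-Lefschetz element. -/
/-- The degree-`i` component of the ideal `(θ₁^r, …, θ_d^r) A^⟨r⟩` of the `r`-th Veronese
subalgebra `A^⟨r⟩ = ⊕_i A_{ir}`, viewed as a `K`-submodule of `A`: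
it is `0` in degree `0` and `θ₁^r A_{ir} + ⋯ + θ_d^r A_{ir}` in degree `i+1`.
The degree-`i` component of `A_Θ^⟨r⟩ = A^⟨r⟩/(θ₁^r, …, θ_d^r)A^⟨r⟩` is then
`𝒜 (i*r) ⧸ veroneseLsopIdealComponent K 𝒜 θ r i`. -/
noncomputable def veroneseLsopIdealComponent (K : Type*) {A : Type*} [CommRing K] [CommRing A]
    [Algebra K A] (𝒜 : ℕ → Submodule K A) {d : ℕ} (θ : Fin d → A) (r : ℕ) :
    ℕ → Submodule K A
  | 0 => ⊥
  | (i + 1) => ⨆ j : Fin d, Submodule.map (LinearMap.mulLeft K (θ j ^ r)) (𝒜 (i * r))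

section SLP
open MvPolynomial

/-- The lowering operator of the `sl₂`-action on `K[x]/(x_j^(q+1))`. -/
noncomputable def lowerOp {K : Type*} [Field K] {d : ℕ} (q : ℕ) (f : MvPolynomial (Fin d) K) :
    MvPolynomial (Fin d) K :=
  ∑ j, ((q : MvPolynomial (Fin d) K) * pderiv j f - X j * pderiv j (pderiv j f))

lemma lowerOp_add {K : Type*} [Field K] {d : ℕ} (q : ℕ) (f g : MvPolynomial (Fin d) K) :
    lowerOp q (f + g) = lowerOp q f + lowerOp q g := by
  simp only [lowerOp, map_add, ← Finset.sum_add_distrib]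
  exact Finset.sum_congr rfl fun j _ => by ring

lemma lowerOp_sum {K : Type*} [Field K] {d : ℕ} (q : ℕ) {ι : Type*} (s : Finset ι)
    (f : ι → MvPolynomial (Fin d) K) :
    lowerOp q (∑ i ∈ s, f i) = ∑ i ∈ s, lowerOp q (f i) := by
  classical
  induction s using Finset.induction_on with
  | empty => simp [lowerOp]
  | insert a s ha ih => rw [Finset.sum_insert ha, Finset.sum_insert ha, lowerOp_add, ih]

lemma pderiv_ell {K : Type*} [Field K] {d : ℕ} (j : Fin d) :
    pderiv j (∑ i, X i : MvPolynomial (Fin d) K) = 1 := by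
  classical
  simp [map_sum, pderiv_X, Pi.single_apply]

lemma lowerOp_ell_mul {K : Type*} [Field K] {d : ℕ} (q e : ℕ) (f : MvPolynomial (Fin d) K)
    (hf : f.IsHomogeneous e) :
    lowerOp q ((∑ i, X i) * f) = (∑ i, X i) * lowerOp q f
      + (((q * d : ℕ) : MvPolynomial (Fin d) K) - 2 * (e : MvPolynomial (Fin d) K)) * f := by
  have hE := hf.sum_X_mul_pderiv
  rw [nsmul_eq_mul] at hE
  have h2 : (((q * d : ℕ) : MvPolynomial (Fin d) K)) * f = ∑ _j : Fin d, (q : MvPolynomial (Fin d) K) * f := by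
    simp; ring
  rw [sub_mul, mul_assoc, ← hE, h2]
  simp only [lowerOp, Finset.mul_sum (s := Finset.univ) (a := (2 : MvPolynomial (Fin d) K))]
  rw [Finset.mul_sum Finset.univ _ (∑ i, X i), ← Finset.sum_sub_distrib, ← Finset.sum_add_distrib]
  refine Finset.sum_congr rfl fun j _ => ?_
  simp only [Derivation.leibniz, pderiv_ell, smul_eq_mul, map_add, mul_one]
  ring

lemma ell_hom {K : Type*} [Field K] {d : ℕ} :
    (∑ i, X i : MvPolynomial (Fin d) K).IsHomogeneous 1 :=
  IsHomogeneous.sum _ _ _ fun i _ => isHomogeneous_X K i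

lemma lowerOp_ell_pow_mul {K : Type*} [Field K] {d : ℕ} (q e m : ℕ) (f : MvPolynomial (Fin d) K)
    (hf : f.IsHomogeneous e) :
    lowerOp q ((∑ i, X i) ^ (m + 1) * f) = (∑ i, X i) ^ (m + 1) * lowerOp q f
      + ((m : MvPolynomial (Fin d) K) + 1) * (((q * d : ℕ) : MvPolynomial (Fin d) K) - 2 * (e : MvPolynomial (Fin d) K) - (m : MvPolynomial (Fin d) K))
        * ((∑ i, X i) ^ m * f) := by
  induction m with
  | zero => simpa using lowerOp_ell_mul q e f hf
  | succ m ih =>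
    have h1 : ((∑ i, X i : MvPolynomial (Fin d) K) ^ (m + 1) * f).IsHomogeneous (m + 1 + e) := by
      simpa using (ell_hom.pow (m + 1)).mul hf
    rw [pow_succ' _ (m + 1), mul_assoc, lowerOp_ell_mul q _ _ h1, ih]
    push_cast
    ring

lemma lowerOp_hom {K : Type*} [Field K] {d : ℕ} (q e : ℕ) (f : MvPolynomial (Fin d) K)
    (hf : f.IsHomogeneous (e + 1)) : (lowerOp q f).IsHomogeneous e := by
  refine IsHomogeneous.sum _ _ _ fun j _ => IsHomogeneous.sub ?_ ?_
  · have := (isHomogeneous_C (Fin d) (q : K)).mul (hf.pderiv (i := j))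
    simpa using this
  · have h := hf.pderiv (i := j)
    rw [Nat.add_sub_cancel] at h
    rcases e with _ | e
    · have h0 : pderiv j f = C (coeff 0 (pderiv j f)) := 
        totalDegree_eq_zero_iff_eq_C.mp (by simpa using h.totalDegree_le)
      rw [h0]; simp [isHomogeneous_zero]
    · have := (isHomogeneous_X K j).mul (h.pderiv (i := j))
      simpa [add_comm] using this

lemma lowerOp_hom_zero {K : Type*} [Field K] {d : ℕ} (q : ℕ) (f : MvPolynomial (Fin d) K)
    (hf : f.IsHomogeneous 0) : lowerOp q f = 0 := by
  have h0 : f = C (coeff 0 f) := 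
    totalDegree_eq_zero_iff_eq_C.mp (by simpa using hf.totalDegree_le)
  rw [h0]; simp [lowerOp]

lemma lowerOp_mem {K : Type*} [Field K] {d : ℕ} (q : ℕ) (f : MvPolynomial (Fin d) K)
    (hf : f ∈ Ideal.span (Set.range fun j : Fin d => (X j : MvPolynomial (Fin d) K) ^ (q + 1))) :
    lowerOp q f ∈ Ideal.span (Set.range fun j : Fin d => (X j : MvPolynomial (Fin d) K) ^ (q + 1)) := by
  classical
  obtain ⟨c, rfl⟩ := Ideal.mem_span_range_iff_exists_fun.mp hf
  rw [lowerOp_sum]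
  refine Ideal.sum_mem _ fun k _ => ?_
  refine Ideal.sum_mem _ fun j _ => ?_
  have hX : (X k : MvPolynomial (Fin d) K) ^ (q + 1) ∈ Ideal.span (Set.range fun j : Fin d => (X j : MvPolynomial (Fin d) K) ^ (q + 1)) :=
    Ideal.subset_span ⟨k, rfl⟩
  by_cases hjk : j = k
  · subst hjk
    have h1 : pderiv j (c j * X j ^ (q + 1)) = pderiv j (c j) * X j ^ (q + 1) + c j * (((q : MvPolynomial (Fin d) K) + 1) * X j ^ q) := by
      simp [Derivation.leibniz, Derivation.leibniz_pow]; ring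
    have h2 : X j * pderiv j (pderiv j (c j * X j ^ (q + 1))) = 
      X j * pderiv j (pderiv j (c j)) * X j ^ (q + 1) + 2 * pderiv j (c j) * ((q : MvPolynomial (Fin d) K) + 1) * X j ^ (q + 1) + c j * ((q : MvPolynomial (Fin d) K) + 1) * (q : MvPolynomial (Fin d) K) * X j ^ q := by
      rw [h1]
      rcases q with _ | q
      · simp [Derivation.leibniz]; ring
      · simp [Derivation.leibniz, Derivation.leibniz_pow]; ring
    rw [h2, h1]
    have : ∀ a z : MvPolynomial (Fin d) K, z = (a) * X j ^ (q+1) → z ∈ Ideal.span (Set.range fun j : Fin d => (X j : MvPolynomial (Fin d) K) ^ (q + 1)) := by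
      rintro a z rfl; exact Ideal.mul_mem_left _ _ hX
    refine this ((q : MvPolynomial (Fin d) K) * pderiv j (c j) - X j * pderiv j (pderiv j (c j)) - 2 * pderiv j (c j) * ((q : MvPolynomial (Fin d) K) + 1)) _ ?_
    ring
  · have h1 : ∀ g : MvPolynomial (Fin d) K, pderiv j (g * X k ^ (q + 1)) = pderiv j g * X k ^ (q + 1) := by
      intro g
      simp [Derivation.leibniz, Derivation.leibniz_pow, pderiv_X_of_ne (Ne.symm hjk)]; ring
    rw [h1, h1, ← mul_assoc, ← mul_assoc, ← sub_mul]
    exact Ideal.mul_mem_left _ _ hX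

/-- The strong Lefschetz property of the monomial complete intersection. -/
lemma monomial_ci_lefschetz {K : Type*} [Field K] [CharZero K] {d : ℕ} (q : ℕ) :
    ∀ (e m : ℕ) (f : MvPolynomial (Fin d) K), f.IsHomogeneous e → 2 * e + m ≤ q * d →
    (∑ i, X i) ^ m * f ∈ Ideal.span (Set.range fun j : Fin d => (X j : MvPolynomial (Fin d) K) ^ (q + 1)) →
    f ∈ Ideal.span (Set.range fun j : Fin d => (X j : MvPolynomial (Fin d) K) ^ (q + 1)) := by
  intro e
  induction e with
  | zero =>
    intro m f hf hm h
    induction m with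
    | zero => simpa using h
    | succ m ih =>
      refine ih (by omega) ?_
      have h1 := lowerOp_mem q _ h
      rw [lowerOp_ell_pow_mul q 0 m f hf, lowerOp_hom_zero q f hf, mul_zero, zero_add] at h1
      have hc : ((m : K) + 1) * (((q * d : ℕ) : K) - 2 * ((0 : ℕ) : K) - (m : K)) ≠ 0 := by
        have : ((q * d : ℕ) : K) - 2 * ((0 : ℕ) : K) - m = ((q * d - m : ℕ) : K) := by
          rw [Nat.cast_sub (by omega)]; simp
        rw [this]
        exact mul_ne_zero (Nat.cast_add_one_ne_zero m) (Nat.cast_ne_zero.mpr (by omega))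
      have h2 := Ideal.mul_mem_left _ (C (((m : K) + 1) * (((q * d : ℕ) : K) - 2 * ((0 : ℕ) : K) - (m : K)))⁻¹) h1
      rw [show ((m : MvPolynomial (Fin d) K) + 1) * (((q * d : ℕ) : MvPolynomial (Fin d) K) - 2 * ((0 : ℕ) : MvPolynomial (Fin d) K) - (m : MvPolynomial (Fin d) K)) = C (((m : K) + 1) * (((q * d : ℕ) : K) - 2 * ((0 : ℕ) : K) - (m : K))) by
        simp only [map_mul, map_sub, map_add, map_natCast, map_one, map_ofNat],
        ← mul_assoc, ← C_mul, inv_mul_cancel₀ hc] at h2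
      simpa using h2
  | succ e ihe =>
    intro m f hf hm h
    induction m with
    | zero => simpa using h
    | succ m ih =>
      refine ih (by omega) ?_
      have h1 := lowerOp_mem q _ h
      rw [lowerOp_ell_pow_mul q (e + 1) m f hf] at h1
      have hF : lowerOp q f ∈ Ideal.span (Set.range fun j : Fin d => (X j : MvPolynomial (Fin d) K) ^ (q + 1)) := by
        refine ihe (m + 2) _ (lowerOp_hom q e f hf) (by omega) ?_
        have h3 := Ideal.mul_mem_left _ (∑ i, X i) h1
        have h4 := Ideal.mul_mem_left _ (((m : MvPolynomial (Fin d) K) + 1) * (((q * d : ℕ) : MvPolynomial (Fin d) K) - 2 * ((e + 1 : ℕ) : MvPolynomial (Fin d) K) - (m : MvPolynomial (Fin d) K))) h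
        have h5 := Ideal.sub_mem _ h3 h4
        convert h5 using 1
        ring
      have h1 := (Ideal.add_mem_iff_right _ (Ideal.mul_mem_left _ _ hF)).mp h1
      have hc : ((m : K) + 1) * (((q * d : ℕ) : K) - 2 * ((e + 1 : ℕ) : K) - (m : K)) ≠ 0 := by
        have : ((q * d : ℕ) : K) - 2 * ((e + 1 : ℕ) : K) - m = ((q * d - 2 * (e + 1) - m : ℕ) : K) := by
          rw [Nat.cast_sub (by omega), Nat.cast_sub (by omega)]; simp
        rw [this]
        exact mul_ne_zero (Nat.cast_add_one_ne_zero m) (Nat.cast_ne_zero.mpr (by omega))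
      have h2 := Ideal.mul_mem_left _ (C (((m : K) + 1) * (((q * d : ℕ) : K) - 2 * ((e + 1 : ℕ) : K) - (m : K)))⁻¹) h1
      rw [show ((m : MvPolynomial (Fin d) K) + 1) * (((q * d : ℕ) : MvPolynomial (Fin d) K) - 2 * ((e + 1 : ℕ) : MvPolynomial (Fin d) K) - (m : MvPolynomial (Fin d) K)) = C (((m : K) + 1) * (((q * d : ℕ) : K) - 2 * ((e + 1 : ℕ) : K) - (m : K))) by
        simp only [map_mul, map_sub, map_add, map_natCast, map_one, map_ofNat],
        ← mul_assoc, ← C_mul, inv_mul_cancel₀ hc] at h2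
      simpa using h2

end SLP

section Indep
open MvPolynomial

lemma regular_indep {K A ι : Type*} [Field K] [CommRing A] [Algebra K A] [Fintype ι] (d : ℕ) :
    ∀ {M : Type*} [AddCommGroup M] [Module A M] (θ : Fin d → A) (b : ι → M),
      RingTheory.Sequence.IsWeaklyRegular M (List.ofFn θ) →
      (∀ (c : ι → K) (y : Fin d → M),
        ∑ k, algebraMap K A (c k) • b k = ∑ j, θ j • y j → ∀ k, c k = 0) →
      ∀ f : ι → MvPolynomial (Fin d) K, ∑ k, aeval θ (f k) • b k = 0 → ∀ k, f k = 0 := by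
  induction d with
  | zero =>
    intro M _ _ θ b hreg H f hf k
    have hC : ∀ k, f k = C (isEmptyAlgEquiv K (Fin 0) (f k)) := fun k => by
      exact (isEmptyAlgEquiv K (Fin 0)).symm_apply_apply (f k) |>.symm
    have := H (fun k => isEmptyAlgEquiv K (Fin 0) (f k)) (fun _ => 0) ?_ k
    · rw [hC k, this, C_0]
    · rw [Finset.sum_eq_zero (s := (Finset.univ : Finset (Fin 0))) (by simp), ← hf]
      refine Finset.sum_congr rfl fun k _ => ?_
      conv_rhs => rw [hC k, aeval_C]
  | succ d ih =>
    intro M _ _ θ b hreg H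
    rw [List.ofFn_succ, RingTheory.Sequence.isWeaklyRegular_cons_iff] at hreg
    obtain ⟨h0, h1⟩ := hreg
    let π : M →ₗ[A] QuotSMulTop (θ 0) M := Submodule.mkQ _
    have key := ih (M := QuotSMulTop (θ 0) M) (fun i => θ i.succ)
      (fun k => π (b k)) h1 (by
        intro c y hy
        choose z hz using fun j => Submodule.Quotient.mk_surjective _ (y j)
        simp only [← hz] at hy
        change ∑ k, algebraMap K A (c k) • π (b k) = ∑ j, θ (Fin.succ j) • π (z j) at hy
        simp only [← map_smul, ← map_sum] at hy
        change (Submodule.Quotient.mk _ : QuotSMulTop (θ 0) M) = Submodule.Quotient.mk _ at hy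
        rw [Submodule.Quotient.eq, Submodule.mem_smul_pointwise_iff_exists] at hy
        obtain ⟨w, -, hw⟩ := hy
        refine H c (Fin.cons w z) ?_
        rw [Fin.sum_univ_succ]
        simp only [Fin.cons_zero, Fin.cons_succ]
        rw [hw]; abel)
    let φ : Polynomial (MvPolynomial (Fin d) K) →+* A :=
      Polynomial.eval₂RingHom (aeval (fun i => θ i.succ) : MvPolynomial (Fin d) K →ₐ[K] A).toRingHom (θ 0)
    have hφ : ∀ p, φ (finSuccEquiv K d p) = aeval θ p := by
      intro p
      induction p using MvPolynomial.induction_on with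
      | C a =>
        rw [show finSuccEquiv K d (C a) = Polynomial.C (C a) by simp [finSuccEquiv_apply]]
        simp [φ]
      | add p q hp hq => simp [hp, hq]
      | mul_X p i hp =>
        rw [map_mul, map_mul, hp, map_mul, aeval_X]
        congr 1
        refine Fin.cases ?_ (fun j => ?_) i
        · simp [φ, finSuccEquiv_X_zero]
        · simp [φ, finSuccEquiv_X_succ]
    have main : ∀ (n : ℕ) (g : ι → Polynomial (MvPolynomial (Fin d) K)),
        ∑ k, φ (g k) • b k = 0 → ∀ k, (g k).coeff n = 0 := by
      have hsplit : ∀ p, φ p = θ 0 * φ p.divX + aeval (fun i => θ i.succ) (p.coeff 0) := by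
        intro p
        conv_lhs => rw [← Polynomial.X_mul_divX_add p, map_add, map_mul]
        simp [φ, -Polynomial.X_mul_divX_add]
      have hzero : ∀ (g : ι → Polynomial (MvPolynomial (Fin d) K)),
          ∑ k, φ (g k) • b k = 0 → ∀ k, (g k).coeff 0 = 0 := by
        intro g hg
        refine key _ ?_
        simp only [← map_smul, ← map_sum]
        change (Submodule.Quotient.mk _ : QuotSMulTop (θ 0) M) = 0
        rw [Submodule.Quotient.mk_eq_zero,
          Submodule.mem_smul_pointwise_iff_exists]
        refine ⟨- ∑ k, φ (g k).divX • b k, trivial, ?_⟩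
        rw [Finset.sum_congr rfl fun k _ => by rw [hsplit (g k)]] at hg
        simp only [add_smul, Finset.sum_add_distrib, mul_smul, ← Finset.smul_sum] at hg
        rw [smul_neg]
        exact neg_eq_of_add_eq_zero_right hg
      intro n
      induction n with
      | zero => exact hzero
      | succ n ihn =>
        intro g hg k
        rw [← Polynomial.coeff_divX]
        refine ihn (fun k => (g k).divX) ?_ k
        have h2 := hzero g hg
        rw [Finset.sum_congr rfl fun k _ => by rw [hsplit (g k)]] at hg
        simp only [h2, map_zero, add_zero, mul_smul, ← Finset.smul_sum] at hg
        exact h0.right_eq_zero_of_smul hg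
    intro f hf k
    apply (finSuccEquiv K d).injective
    rw [map_zero]
    ext1 n
    rw [Polynomial.coeff_zero]
    exact main n (fun k => finSuccEquiv K d (f k)) (by simpa only [hφ] using hf) k
end Indep

section Main
open MvPolynomial

/-- Existence of a finite homogeneous family of elements which is a basis modulo `ΘA`. -/
lemma exists_homog_basis {K A : Type*} [Field K] [CommRing A] [Algebra K A]
    (𝒜 : ℕ → Submodule K A) [GradedAlgebra 𝒜] (I : Ideal A) (hI : Module.Finite K (A ⧸ I)) :
    ∃ (n : ℕ) (b : Fin n → A) (a : Fin n → ℕ), (∀ k, b k ∈ 𝒜 (a k)) ∧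
      (∀ c : Fin n → K, ∑ k, c k • b k ∈ I → ∀ k, c k = 0) ∧
      (∀ x : A, ∃ c : Fin n → K, x - ∑ k, c k • b k ∈ I) := by
  classical
  let π : A →ₗ[K] A ⧸ I := (Ideal.Quotient.mkₐ K I).toLinearMap
  have hπ : ∀ x, π x = 0 ↔ x ∈ I := fun x => Ideal.Quotient.eq_zero_iff_mem
  have hπs : Function.Surjective π := Ideal.Quotient.mk_surjective
  let T : Set (A ⧸ I) := π '' {x | ∃ i, x ∈ 𝒜 i}
  have hT : Submodule.span K T = ⊤ := by
    rw [eq_top_iff]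
    rintro y -
    obtain ⟨x, rfl⟩ := hπs y
    rw [← DirectSum.sum_support_decompose 𝒜 x, map_sum]
    exact Submodule.sum_mem _ fun i _ => Submodule.subset_span ⟨_, ⟨i, SetLike.coe_mem _⟩, rfl⟩
  obtain ⟨t, htT, -, hts, hti⟩ := Submodule.exists_finset_span_eq_linearIndepOn K T
  rw [hT] at hts
  let e := t.equivFin
  have hx : ∀ k : Fin t.card, ∃ x : A, (∃ i, x ∈ 𝒜 i) ∧ π x = (e.symm k : A ⧸ I) := fun k =>
    htT (e.symm k).2
  choose b hb hbπ using hx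
  choose a ha using hb
  have hind : LinearIndependent K (fun k => π (b k)) := by
    have h1 : LinearIndependent K (fun i : t => (i : A ⧸ I)) := hti
    have := h1.comp e.symm e.symm.injective
    convert this using 2 with k
    exact hbπ k
  have hspan : Submodule.span K (Set.range fun k => π (b k)) = ⊤ := by
    rw [← hts]
    congr 1
    ext y
    constructor
    · rintro ⟨k, rfl⟩
      simp only [hbπ]
      exact (e.symm k).2
    · intro hy
      exact ⟨e ⟨y, hy⟩, by simp [hbπ]⟩
  refine ⟨t.card, b, a, ha, ?_, ?_⟩
  · intro c hc
    rw [← hπ, map_sum] at hc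
    simp only [map_smul] at hc
    exact Fintype.linearIndependent_iff.mp hind c hc
  · intro x
    have : π x ∈ Submodule.span K (Set.range fun k => π (b k)) := by rw [hspan]; trivial
    obtain ⟨c, hc⟩ := (Submodule.mem_span_range_iff_exists_fun K).mp this
    refine ⟨c, ?_⟩
    rw [← hπ, map_sub, map_sum, ← hc]
    simp

/-- Taking the degree-`n` part of a combination of elements of degree `s`. -/
lemma homog_comb {K A : Type*} [Field K] [CommRing A] [Algebra K A]
    (𝒜 : ℕ → Submodule K A) [GradedAlgebra 𝒜] {d : ℕ} (η : Fin d → A) (s n : ℕ)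
    (hη : ∀ j, η j ∈ 𝒜 s) (x : A)
    (h : x ∈ Ideal.span (Set.range η)) :
    (n < s → (DirectSum.decompose 𝒜 x n : A) = 0) ∧
    (s ≤ n → ∃ y : Fin d → A, (∀ j, y j ∈ 𝒜 (n - s)) ∧
      (DirectSum.decompose 𝒜 x n : A) = ∑ j, η j * y j) := by
  obtain ⟨c, rfl⟩ := Ideal.mem_span_range_iff_exists_fun.mp h
  constructor
  · intro hn
    rw [DirectSum.decompose_sum, DFinsupp.finsetSum_apply, AddSubmonoidClass.coe_finsetSum]
    exact Finset.sum_eq_zero fun j _ =>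
      DirectSum.coe_decompose_mul_of_right_mem_of_not_le 𝒜 (hη j) (by omega)
  · intro hn
    refine ⟨fun j => DirectSum.decompose 𝒜 (c j) (n - s), fun j => SetLike.coe_mem _, ?_⟩
    rw [DirectSum.decompose_sum, DFinsupp.finsetSum_apply, AddSubmonoidClass.coe_finsetSum]
    refine Finset.sum_congr rfl fun j _ => ?_
    rw [DirectSum.coe_decompose_mul_of_right_mem_of_le 𝒜 (hη j) hn, mul_comm]

lemma homog_span {K A : Type*} [Field K] [CommRing A] [Algebra K A]
    (𝒜 : ℕ → Submodule K A) [GradedAlgebra 𝒜] {d : ℕ} (θ : Fin d → A)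
    (hθ : ∀ j, θ j ∈ 𝒜 1) {m : ℕ} (b : Fin m → A) (a : Fin m → ℕ) (hb : ∀ k, b k ∈ 𝒜 (a k))
    (hs : ∀ x : A, ∃ c : Fin m → K, x - ∑ k, c k • b k ∈ Ideal.span (Set.range θ)) (n : ℕ) :
    ∀ x ∈ 𝒜 n, ∃ f : Fin m → MvPolynomial (Fin d) K,
      (∀ k, (f k).IsHomogeneous (n - a k)) ∧ (∀ k, n < a k → f k = 0) ∧
      x = ∑ k, aeval θ (f k) * b k := by
  classical
  induction n with
  | zero =>
    intro x hx
    obtain ⟨c, hc⟩ := hs x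
    have h0 := (homog_comb 𝒜 θ 1 0 hθ _ hc).1 (by norm_num)
    refine ⟨fun k => if a k = 0 then C (c k) else 0, ?_, ?_, ?_⟩
    · intro k; dsimp only; split_ifs with h
      · rw [Nat.zero_sub]; exact isHomogeneous_C _ _
      · exact isHomogeneous_zero _ _ _
    · intro k hk; exact if_neg (by omega)
    · rw [DirectSum.decompose_sub, DFinsupp.sub_apply, AddSubgroupClass.coe_sub, sub_eq_zero,
        DirectSum.decompose_of_mem_same 𝒜 hx, DirectSum.decompose_sum, DFinsupp.finsetSum_apply,
        AddSubmonoidClass.coe_finsetSum] at h0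
      rw [h0]
      refine Finset.sum_congr rfl fun k _ => ?_
      try dsimp only
      split_ifs with h
      · rw [DirectSum.decompose_of_mem_same 𝒜 (h ▸ Submodule.smul_mem _ _ (hb k)), aeval_C,
          Algebra.smul_def]
      · rw [DirectSum.decompose_of_mem_ne 𝒜 (Submodule.smul_mem _ _ (hb k)) h]; simp
  | succ n ih =>
    intro x hx
    obtain ⟨c, hc⟩ := hs x
    obtain ⟨y, hy, h0⟩ := (homog_comb 𝒜 θ 1 (n + 1) hθ _ hc).2 (by omega)
    choose g hg1 hg2 hg3 using fun j => ih (y j) (hy j)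
    refine ⟨fun k => (if a k = n + 1 then C (c k) else 0) + ∑ j, X j * g j k, ?_, ?_, ?_⟩
    · intro k
      refine IsHomogeneous.add ?_ (IsHomogeneous.sum _ _ _ fun j _ => ?_)
      · split_ifs with h
        · rw [h, Nat.sub_self]; exact isHomogeneous_C _ _
        · exact isHomogeneous_zero _ _ _
      · by_cases h : n < a k
        · rw [hg2 j k h, mul_zero]; exact isHomogeneous_zero _ _ _
        · have := (isHomogeneous_X K j).mul (hg1 j k)
          rwa [show 1 + (n - a k) = n + 1 - a k by omega] at this
    · intro k hk
      try dsimp only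
      rw [if_neg (by omega), zero_add]
      exact Finset.sum_eq_zero fun j _ => by rw [hg2 j k (by omega), mul_zero]
    · rw [DirectSum.decompose_sub, DFinsupp.sub_apply, AddSubgroupClass.coe_sub, sub_eq_iff_eq_add,
        DirectSum.decompose_of_mem_same 𝒜 hx, DirectSum.decompose_sum, DFinsupp.finsetSum_apply,
        AddSubmonoidClass.coe_finsetSum] at h0
      rw [h0, add_comm]
      simp only [map_add, add_mul, Finset.sum_add_distrib, map_sum, map_mul, aeval_X]
      congr 1
      · refine Finset.sum_congr rfl fun k _ => ?_
        try dsimp only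
        split_ifs with h
        · rw [DirectSum.decompose_of_mem_same 𝒜 (h ▸ Submodule.smul_mem _ _ (hb k)), aeval_C,
            Algebra.smul_def]
        · rw [DirectSum.decompose_of_mem_ne 𝒜 (Submodule.smul_mem _ _ (hb k)) h]; simp
      · simp only [Finset.sum_mul]
        rw [Finset.sum_comm]
        refine Finset.sum_congr rfl fun j _ => ?_
        conv_lhs => rw [hg3 j, Finset.mul_sum]
        exact Finset.sum_congr rfl fun k _ => by ring

lemma all_span {K A : Type*} [Field K] [CommRing A] [Algebra K A]
    (𝒜 : ℕ → Submodule K A) [GradedAlgebra 𝒜] {d : ℕ} (θ : Fin d → A)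
    (hθ : ∀ j, θ j ∈ 𝒜 1) {m : ℕ} (b : Fin m → A) (a : Fin m → ℕ) (hb : ∀ k, b k ∈ 𝒜 (a k))
    (hs : ∀ x : A, ∃ c : Fin m → K, x - ∑ k, c k • b k ∈ Ideal.span (Set.range θ)) (x : A) :
    ∃ f : Fin m → MvPolynomial (Fin d) K, x = ∑ k, aeval θ (f k) * b k := by
  classical
  choose f hf1 hf2 hf3 using fun n => homog_span 𝒜 θ hθ b a hb hs n
    (DirectSum.decompose 𝒜 x n : A) (SetLike.coe_mem _)
  refine ⟨fun k => ∑ n ∈ (DirectSum.decompose 𝒜 x).support, f n k, ?_⟩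
  conv_lhs => rw [← DirectSum.sum_support_decompose 𝒜 x]
  simp only [map_sum, Finset.sum_mul]
  rw [Finset.sum_comm]
  exact Finset.sum_congr rfl fun n _ => hf3 n

lemma lefschetz_core {K A : Type*} [Field K] [CharZero K] [CommRing A] [Algebra K A]
    (𝒜 : ℕ → Submodule K A) [GradedAlgebra 𝒜] {d : ℕ} (θ : Fin d → A)
    (hθ : ∀ j, θ j ∈ 𝒜 1)
    (hfin : Module.Finite K (A ⧸ Ideal.span (Set.range θ)))
    (hreg : RingTheory.Sequence.IsWeaklyRegular A (List.ofFn θ))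
    (q n m : ℕ) (hnm : 2 * n + m ≤ q * d) (x : A) (hx : x ∈ 𝒜 n)
    (h : (∑ j, θ j) ^ m * x ∈ Ideal.span (Set.range fun j => θ j ^ (q + 1))) :
    x ∈ Ideal.span (Set.range fun j => θ j ^ (q + 1)) := by
  obtain ⟨N, b, a, hb, hi, hs⟩ := exists_homog_basis 𝒜 _ hfin
  have hind := regular_indep (K := K) d θ b hreg (by
    intro c y hy
    refine hi c ?_
    simp only [Algebra.smul_def]
    simp only [smul_eq_mul] at hy
    rw [hy]
    exact Ideal.sum_mem _ fun j _ => Ideal.mul_mem_right _ _ (Ideal.subset_span ⟨j, rfl⟩))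
  obtain ⟨f, hf1, hf2, hf3⟩ := homog_span 𝒜 θ hθ b a hb hs n x hx
  obtain ⟨c, hc⟩ := Ideal.mem_span_range_iff_exists_fun.mp h
  choose g hg using fun j => all_span 𝒜 θ hθ b a hb hs (c j)
  have heq : ∀ k, (∑ i, X i) ^ m * f k - ∑ j, g j k * X j ^ (q + 1) = 0 := by
    refine hind (fun k => (∑ i, X i) ^ m * f k - ∑ j, g j k * X j ^ (q + 1)) ?_
    simp only [map_sub, map_mul, map_pow, map_sum, aeval_X, smul_eq_mul, sub_mul,
      Finset.sum_sub_distrib]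
    rw [sub_eq_zero]
    have e1 : ∑ k, (∑ j, θ j) ^ m * aeval θ (f k) * b k = (∑ j, θ j) ^ m * x := by
      rw [hf3, Finset.mul_sum]
      exact Finset.sum_congr rfl fun k _ => by ring
    rw [e1, ← hc]
    simp only [Finset.sum_mul]
    rw [Finset.sum_comm]
    refine Finset.sum_congr rfl fun j _ => ?_
    conv_lhs => rw [hg j, Finset.sum_mul]
    exact Finset.sum_congr rfl fun k _ => by ring
  have hfk : ∀ k, f k ∈ Ideal.span (Set.range fun j : Fin d => (X j : MvPolynomial (Fin d) K) ^ (q + 1)) := by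
    intro k
    refine monomial_ci_lefschetz q (n - a k) m (f k) (hf1 k) (by omega) ?_
    rw [sub_eq_zero.mp (heq k)]
    exact Ideal.sum_mem _ fun j _ => Ideal.mul_mem_left _ _ (Ideal.subset_span ⟨j, rfl⟩)
  rw [hf3]
  refine Ideal.sum_mem _ fun k _ => Ideal.mul_mem_right _ _ ?_
  obtain ⟨u, hu⟩ := Ideal.mem_span_range_iff_exists_fun.mp (hfk k)
  rw [← hu]
  simp only [map_sum, map_mul, map_pow, aeval_X]
  exact Ideal.sum_mem _ fun j _ => Ideal.mul_mem_left _ _ (Ideal.subset_span ⟨j, rfl⟩)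

end Main


/-- **Theorem 1.1 (first part), Kubitzke–Murai.**
Let `K` be a field of characteristic `0`, `A` a Cohen-Macaulay standard graded `K`-algebra of
Krull dimension `d` (Cohen-Macaulayness is expressed by the statement that every linear system
of parameters is a regular sequence), let `Θ = θ₁,…,θ_d` be an l.s.o.p. for `A`, let `r ≥ 1`
and `s = ⌊(r-1)d/r⌋`.  Then `w = (θ₁ + ⋯ + θ_d)^r` is an `s`-Lefschetz element for
`A_Θ^⟨r⟩`, i.e. multiplication by `w^(s-2i)` is injective from the degree-`i` to the
degree-`(s-i)` component of `A_Θ^⟨r⟩` for `0 ≤ i ≤ ⌊(s-1)/2⌋`; in particular `A_Θ^⟨r⟩` has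
the `s`-Lefschetz property. -/
theorem veronese_sLefschetz
    (K : Type*) [Field K] [CharZero K]
    (A : Type*) [CommRing A] [Algebra K A]
    (𝒜 : ℕ → Submodule K A) [GradedAlgebra 𝒜]
    (hstd : ∀ i, 𝒜 i = 𝒜 1 ^ i)
    (hfin : ∀ i, Module.Finite K (𝒜 i))
    (d : ℕ) (hdim : ringKrullDim A = d)
    (hCM : ∀ θ' : Fin d → A, (∀ j, θ' j ∈ 𝒜 1) →
      Module.Finite K (A ⧸ Ideal.span (Set.range θ')) →
      RingTheory.Sequence.IsRegular A (List.ofFn θ'))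
    (θ : Fin d → A) (hθ1 : ∀ j, θ j ∈ 𝒜 1)
    (hθlsop : Module.Finite K (A ⧸ Ideal.span (Set.range θ)))
    (r : ℕ) (hr : 1 ≤ r) :
    ∀ i : ℕ, 2 * i + 1 ≤ (r - 1) * d / r →
      ∀ x ∈ 𝒜 (i * r),
        ((∑ j, θ j) ^ r) ^ ((r - 1) * d / r - 2 * i) * x ∈
            veroneseLsopIdealComponent K 𝒜 θ r ((r - 1) * d / r - i) →
          x ∈ veroneseLsopIdealComponent K 𝒜 θ r i := by
  intro i hi x hx h
  obtain ⟨q, rfl⟩ : ∃ q, r = q + 1 := ⟨r - 1, by omega⟩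
  rw [Nat.add_sub_cancel] at hi h
  set s := q * d / (q + 1) with hs
  have hsle : s * (q + 1) ≤ q * d := Nat.div_mul_le_self _ _
  have hη : ∀ j, θ j ^ (q + 1) ∈ 𝒜 (q + 1) := fun j => by
    simpa using SetLike.pow_mem_graded (q + 1) (hθ1 j)
  have hmem : x ∈ Ideal.span (Set.range fun j => θ j ^ (q + 1)) := by
    refine lefschetz_core 𝒜 θ hθ1 hθlsop (hCM θ hθ1 hθlsop).toIsWeaklyRegular q (i * (q + 1))
      ((q + 1) * (s - 2 * i)) ?_ x hx ?_
    · obtain ⟨t, ht⟩ : ∃ t, s = 2 * i + t := ⟨s - 2 * i, by omega⟩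
      rw [ht] at hsle ⊢
      rw [Nat.add_sub_cancel_left]
      nlinarith
    · rw [pow_mul]
      obtain ⟨t, ht⟩ : ∃ t, s - i = t + 1 := ⟨s - i - 1, by omega⟩
      rw [ht] at h
      have hle : veroneseLsopIdealComponent K 𝒜 θ (q + 1) (t + 1) ≤
          (Ideal.span (Set.range fun j => θ j ^ (q + 1))).restrictScalars K := by
        refine iSup_le fun j => ?_
        rintro _ ⟨y, -, rfl⟩
        exact Ideal.mul_mem_right _ _ (Ideal.subset_span ⟨j, rfl⟩)
      exact hle h
  have hcomb := homog_comb 𝒜 _ (q + 1) (i * (q + 1)) hη x hmem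
  rw [DirectSum.decompose_of_mem_same 𝒜 hx] at hcomb
  rcases i with _ | i
  · have := hcomb.1 (by omega)
    rw [this]
    exact Submodule.zero_mem _
  · have he : (i + 1) * (q + 1) - (q + 1) = i * (q + 1) := by
      rw [Nat.succ_mul, Nat.add_sub_cancel]
    obtain ⟨y, hy, hxy⟩ := hcomb.2 (by nlinarith)
    rw [he] at hy
    rw [hxy]
    refine Submodule.sum_mem _ fun j _ => ?_
    exact Submodule.mem_iSup_of_mem j ⟨y j, hy j, rfl⟩
end

section
/- Let K be a field of characteristic 0, let A be a Cohen-Macaulay standard graded K-algebra of Krull dimension d with h-polynomial h_A(t), and let Θ = θ_1,…,θ_d be a linear system of parameters for A. If r ≥ deg h_A(t), then A_Θ^⟨r⟩ is almost strong Lefschetz, i.e., writing A_Θ^⟨r⟩ = ⊕_{i=0}^{σ} (A_Θ^⟨r⟩)_i with (A_Θ^⟨r⟩)_σ ≠ 0, the algebra A_Θ^⟨r⟩ has the (σ−1)-Lefschetz property. -/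
namespace VeroneseLef
open MvPolynomial

section Lef
variable {K : Type*} [Field K] {d : ℕ}

/-- The lowering operator of the `sl₂`-action, lifted to the polynomial ring. -/
noncomputable def Fop (s : ℕ) (f : MvPolynomial (Fin d) K) : MvPolynomial (Fin d) K :=
  ∑ j, ((s : MvPolynomial (Fin d) K) * pderiv j f - X j * pderiv j (pderiv j f))

/-- The sum of the variables. -/
noncomputable def ell : MvPolynomial (Fin d) K := ∑ j, X j

lemma pderiv_ell (j : Fin d) : pderiv j (ell : MvPolynomial (Fin d) K) = 1 := by
  classical
  simp [ell, map_sum, pderiv_X, Pi.single_apply]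

lemma Fop_add (s : ℕ) (f g : MvPolynomial (Fin d) K) : Fop s (f + g) = Fop s f + Fop s g := by
  simp only [Fop, map_add, ← Finset.sum_add_distrib]
  exact Finset.sum_congr rfl fun _ _ => by ring

lemma Fop_zero (s : ℕ) : Fop s (0 : MvPolynomial (Fin d) K) = 0 := by simp [Fop]

lemma Fop_ell (s a : ℕ) (f : MvPolynomial (Fin d) K) (hf : f.IsHomogeneous a) :
    Fop s (ell * f) = ell * Fop s f + ((d * s : ℕ) - 2 * a : MvPolynomial (Fin d) K) * f := by
  have he := hf.sum_X_mul_pderiv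
  have : ((d * s : ℕ) - 2 * a : MvPolynomial (Fin d) K) * f =
      ∑ j : Fin d, ((s : MvPolynomial (Fin d) K) * f - 2 * (X j * pderiv j f)) := by
    rw [Finset.sum_sub_distrib, ← Finset.mul_sum, ← Finset.mul_sum, he]
    simp; ring
  rw [this, Fop, Fop, Finset.mul_sum, ← Finset.sum_add_distrib]
  refine Finset.sum_congr rfl fun j _ => ?_
  simp only [Derivation.leibniz, pderiv_ell, smul_eq_mul, map_add, Derivation.map_one_eq_zero]
  ring

lemma ell_hom : (ell : MvPolynomial (Fin d) K).IsHomogeneous 1 :=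
  IsHomogeneous.sum _ _ _ fun j _ => isHomogeneous_X K j

lemma Fop_ell_pow (s a k : ℕ) (f : MvPolynomial (Fin d) K) (hf : f.IsHomogeneous a) :
    Fop s (ell ^ (k + 1) * f) = ell ^ (k + 1) * Fop s f +
      ((k + 1) * ((d * s : ℕ) - 2 * a - k) : MvPolynomial (Fin d) K) * (ell ^ k * f) := by
  induction k with
  | zero => simpa using Fop_ell s a f hf
  | succ k ih =>
    have hh : (ell ^ (k + 1) * f).IsHomogeneous (k + 1 + a) := by
      simpa using (ell_hom.pow (k + 1)).mul hf
    rw [pow_succ' _ (k + 1), mul_assoc, Fop_ell s _ _ hh, ih]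
    push_cast
    ring

lemma Fop_hom_zero (s : ℕ) (f : MvPolynomial (Fin d) K) (hf : f.IsHomogeneous 0) :
    Fop s f = 0 := by
  rw [← totalDegree_zero_iff_isHomogeneous, totalDegree_eq_zero_iff_eq_C] at hf
  rw [hf]; simp [Fop]

lemma Fop_hom_succ (s a : ℕ) (f : MvPolynomial (Fin d) K) (hf : f.IsHomogeneous (a + 1)) :
    (Fop s f).IsHomogeneous a := by
  refine IsHomogeneous.sum _ _ _ fun j _ => ?_
  refine (homogeneousSubmodule (Fin d) K a).sub_mem ?_ ?_
  · have := (isHomogeneous_C (Fin d) (s : K)).mul (hf.pderiv (i := j))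
    simpa using this
  · rcases Nat.eq_zero_or_pos a with rfl | ha
    · have h0 : (pderiv j f).IsHomogeneous 0 := hf.pderiv
      rw [← totalDegree_zero_iff_isHomogeneous, totalDegree_eq_zero_iff_eq_C] at h0
      rw [h0]; simp
    · have := (isHomogeneous_X K j).mul ((hf.pderiv (i := j)).pderiv (i := j))
      have h2 : 1 + (a + 1 - 1 - 1) = a := by omega
      rwa [h2] at this

/-- The ideal generated by the `r`-th powers of the variables. -/
noncomputable def powI (K : Type*) [Field K] (d r : ℕ) : Ideal (MvPolynomial (Fin d) K) :=
  Ideal.span (Set.range fun j : Fin d => (X j : MvPolynomial (Fin d) K) ^ r)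

lemma Fop_mem (s : ℕ) (f : MvPolynomial (Fin d) K) (hf : f ∈ powI K d (s + 1)) :
    Fop s f ∈ powI K d (s + 1) := by
  classical
  refine Submodule.span_induction (p := fun f _ => ∀ g, Fop s (g * f) ∈ powI K d (s + 1))
    ?_ ?_ ?_ ?_ hf 1 |> fun h => by simpa using h
  · rintro _ ⟨j, rfl⟩ g
    refine Ideal.sum_mem _ fun i _ => ?_
    have hX : (X j : MvPolynomial (Fin d) K) ^ (s + 1) ∈ powI K d (s + 1) :=
      Ideal.subset_span ⟨j, rfl⟩
    by_cases hij : j = i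
    · subst hij
      have : (s : MvPolynomial (Fin d) K) * pderiv j (g * X j ^ (s + 1)) -
          X j * pderiv j (pderiv j (g * X j ^ (s + 1))) =
          ((s : MvPolynomial (Fin d) K) * pderiv j g - X j * pderiv j (pderiv j g) - 2 * (s + 1 : MvPolynomial (Fin d) K) * pderiv j g) *
            X j ^ (s + 1) := by
        rcases s with _ | s
        · simp [Derivation.leibniz]; ring
        · simp [Derivation.leibniz, Derivation.leibniz_pow]; ring
      simp only [this]
      exact Ideal.mul_mem_left _ _ hX
    · have h0 : pderiv i (X j : MvPolynomial (Fin d) K) = 0 := pderiv_X_of_ne hij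
      have : (s : MvPolynomial (Fin d) K) * pderiv i (g * X j ^ (s + 1)) -
          X i * pderiv i (pderiv i (g * X j ^ (s + 1))) =
          ((s : MvPolynomial (Fin d) K) * pderiv i g - X i * pderiv i (pderiv i g)) * X j ^ (s + 1) := by
        simp [Derivation.leibniz, Derivation.leibniz_pow, h0]; ring
      simp only [this]
      exact Ideal.mul_mem_left _ _ hX
  · intro g; simp [Fop_zero]
  · intro x y _ _ hx hy g
    rw [mul_add, Fop_add]; exact Ideal.add_mem _ (hx g) (hy g)
  · intro a x _ hx g
    rw [smul_eq_mul, ← mul_assoc]; exact hx _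

lemma lefschetz [CharZero K] (s : ℕ) : ∀ (a k : ℕ) (f : MvPolynomial (Fin d) K), f.IsHomogeneous a →
    2 * a + k ≤ d * s → ell ^ k * f ∈ powI K d (s + 1) → f ∈ powI K d (s + 1) := by
  intro a
  induction a with
  | zero =>
    intro k
    induction k with
    | zero => intro f _ _ h; simpa using h
    | succ k ih =>
      intro f hf hk h
      have h1 := Fop_mem s _ h
      rw [Fop_ell_pow s 0 k f hf, Fop_hom_zero s f hf] at h1
      refine ih f hf (by omega) ?_
      have hc : ((k + 1) * ((d * s : ℕ) - 2 * (0 : ℕ) - k) : MvPolynomial (Fin d) K) =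
          C ((((k + 1) * (d * s - k) : ℕ)) : K) := by
        rw [Nat.cast_mul (k + 1), Nat.cast_sub (by omega)]; simp
      rw [hc, mul_zero, zero_add] at h1
      have h2 := Ideal.mul_mem_left _ (C (((((k + 1) * (d * s - k) : ℕ)) : K)⁻¹)) h1
      rw [← mul_assoc, ← C_mul, inv_mul_cancel₀, C_1, one_mul] at h2
      · exact h2
      · rw [Nat.cast_ne_zero]
        exact Nat.mul_ne_zero (by omega) (by omega)
  | succ a iha =>
    intro k
    induction k with
    | zero => intro f _ _ h; simpa using h
    | succ k ih =>
      intro f hf hk h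
      have h1 := Fop_mem s _ h
      rw [Fop_ell_pow s (a + 1) k f hf] at h1
      have hF : Fop s f ∈ powI K d (s + 1) := by
        refine iha (k + 2) _ (Fop_hom_succ s a f hf) (by omega) ?_
        have h2 := Ideal.mul_mem_left _ ell h1
        have h3 := Ideal.mul_mem_left _
          ((k + 1) * ((d * s : ℕ) - 2 * (a + 1 : ℕ) - k) : MvPolynomial (Fin d) K) h
        have h4 := Ideal.sub_mem _ h2 h3
        convert h4 using 1
        ring
      refine ih f hf (by omega) ?_
      have hc : ((k + 1) * ((d * s : ℕ) - 2 * (a + 1 : ℕ) - k) : MvPolynomial (Fin d) K) =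
          C ((((k + 1) * (d * s - 2 * (a + 1) - k) : ℕ)) : K) := by
        rw [Nat.cast_mul (k + 1), Nat.cast_sub (by omega), Nat.cast_sub (by omega)]; simp
        exact Or.inl (Or.inl (map_ofNat C 2).symm)
      rw [hc] at h1
      have h1 := (Ideal.add_mem_iff_right _ (Ideal.mul_mem_left _ _ hF)).1 h1
      have h2 := Ideal.mul_mem_left _ (C (((((k + 1) * (d * s - 2 * (a + 1) - k) : ℕ)) : K)⁻¹)) h1
      rw [← mul_assoc, ← C_mul, inv_mul_cancel₀, C_1, one_mul] at h2
      · exact h2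
      · rw [Nat.cast_ne_zero]
        exact Nat.mul_ne_zero (by omega) (by omega)

lemma pigeon (s : ℕ) (f : MvPolynomial (Fin d) K)
    (hf : ∀ m, coeff m f ≠ 0 → d * s < m.degree) : f ∈ powI K d (s + 1) := by
  rw [f.as_sum]
  refine Ideal.sum_mem _ fun m hm => ?_
  have h1 := hf m (by simpa using hm)
  obtain ⟨j, hj⟩ : ∃ j, s + 1 ≤ m j := by
    by_contra! hcon
    have : m.degree ≤ ∑ _j : Fin d, s := by
      rw [Finsupp.degree_eq_sum]
      exact Finset.sum_le_sum fun j _ => by have := hcon j; omega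
    simp at this
    omega
  have : monomial m (coeff m f) = monomial (m - Finsupp.single j (s + 1)) (coeff m f) *
      X j ^ (s + 1) := by
    rw [X_pow_eq_monomial, monomial_mul, mul_one, tsub_add_cancel_of_le]
    rwa [Finsupp.single_le_iff]
  rw [this]
  exact Ideal.mul_mem_left _ _ (Ideal.subset_span ⟨j, rfl⟩)
end Lef

section Indep
open RingTheory.Sequence
open scoped Pointwise

lemma regular_indep {K A : Type*} [Field K] [CommRing A] [Algebra K A] {ι : Type*} (S : Finset ι) :
    ∀ (d : ℕ) (θ : Fin d → A) (M : Type _) [AddCommGroup M] [Module A M] (b : ι → M),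
      IsWeaklyRegular M (List.ofFn θ) →
      (∀ c : ι → K, ∑ k ∈ S, algebraMap K A (c k) • b k ∈
        (Ideal.ofList (List.ofFn θ) • ⊤ : Submodule A M) → ∀ k ∈ S, c k = 0) →
      ∀ p : ι → MvPolynomial (Fin d) K, ∑ k ∈ S, aeval θ (p k) • b k = 0 → ∀ k ∈ S, p k = 0 := by
  intro d
  induction d with
  | zero =>
    intro θ M _ _ b _ hb p hp k hk
    have hC : ∀ k, p k = C (coeff 0 (p k)) := fun k => eq_C_of_isEmpty _
    have := hb (fun k => coeff 0 (p k)) (by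
      have h0 : ∑ k ∈ S, algebraMap K A (coeff 0 (p k)) • b k = 0 := by
        rw [← hp]
        refine Finset.sum_congr rfl fun k _ => ?_
        conv_rhs => rw [hC k, aeval_C]
      rw [h0]; exact Submodule.zero_mem _) k hk
    rw [hC k, this, C_0]
  | succ d ih =>
    intro θ M _ _ b hreg hb p hp
    rw [List.ofFn_succ, isWeaklyRegular_cons_iff] at hreg
    rw [List.ofFn_succ] at hb
    obtain ⟨hreg0, hreg1⟩ := hreg
    set τ : Fin d → A := fun i => θ i.succ with hτ
    let ev : Polynomial (MvPolynomial (Fin d) K) → A :=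
      Polynomial.eval₂ (aeval τ : MvPolynomial (Fin d) K →ₐ[K] A).toRingHom (θ 0)
    have hev : ∀ q : MvPolynomial (Fin (d + 1)) K, aeval θ q = ev (finSuccEquiv K d q) := by
      intro q
      induction q using MvPolynomial.induction_on with
      | C a => simp [ev, finSuccEquiv_apply]
      | add p q hp hq => simp only [map_add, hp, hq, ev, Polynomial.eval₂_add]
      | mul_X p i hp =>
        have h2 : aeval θ (X i : MvPolynomial (Fin (d + 1)) K) = ev (finSuccEquiv K d (X i)) := by
          refine Fin.cases ?_ (fun i => ?_) i
          · simp [ev, finSuccEquiv_X_zero]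
          · simp [ev, finSuccEquiv_X_succ, hτ]
        rw [map_mul, map_mul, hp, h2]
        exact (Polynomial.eval₂_mul _ _).symm
    have hb' : ∀ c : ι → K, ∑ k ∈ S, algebraMap K A (c k) •
        (Submodule.Quotient.mk (b k) : QuotSMulTop (θ 0) M) ∈
        (Ideal.ofList (List.ofFn τ) • ⊤ : Submodule A (QuotSMulTop (θ 0) M)) →
        ∀ k ∈ S, c k = 0 := by
      intro c hc
      refine hb c ?_
      have e1 : (Ideal.ofList (List.ofFn τ) • ⊤ : Submodule A (QuotSMulTop (θ 0) M)) =
          (Ideal.ofList (List.ofFn τ) • ⊤ : Submodule A M).map (Submodule.mkQ _) := by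
        rw [Submodule.map_smul'', Submodule.map_top, Submodule.range_mkQ]
      rw [e1] at hc
      obtain ⟨z, hz, hz2⟩ := hc
      rw [Ideal.ofList_cons_smul]
      have h3 : (Submodule.mkQ (θ 0 • ⊤ : Submodule A M)) z =
          (Submodule.mkQ (θ 0 • ⊤ : Submodule A M)) (∑ k ∈ S, algebraMap K A (c k) • b k) := by
        rw [hz2, map_sum]; rfl
      have h4 := (Submodule.Quotient.eq (θ 0 • ⊤ : Submodule A M)).1 h3.symm
      have h5 := Submodule.add_mem_sup h4 hz
      simpa using h5
    have key : ∀ (N : ℕ) (q : ι → Polynomial (MvPolynomial (Fin d) K)),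
        (∀ k ∈ S, ∀ n, N ≤ n → (q k).coeff n = 0) →
        ∑ k ∈ S, ev (q k) • b k = 0 → ∀ k ∈ S, q k = 0 := by
      intro N
      induction N with
      | zero =>
        intro q hq _ k hk
        ext1 n
        rw [hq k hk n (Nat.zero_le _)]; simp
      | succ N ihN =>
        intro q hq hsum
        have hdec : ∀ k, ev (q k) = θ 0 * ev (q k).divX + aeval τ ((q k).coeff 0) := by
          intro k
          conv_lhs => rw [← Polynomial.divX_mul_X_add (q k)]
          simp only [ev, Polynomial.eval₂_add, Polynomial.eval₂_mul_X, Polynomial.eval₂_C]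
          rw [mul_comm]; rfl
        have h0 : ∀ k ∈ S, (q k).coeff 0 = 0 := by
          refine ih τ (QuotSMulTop (θ 0) M) (fun k => Submodule.Quotient.mk (b k)) hreg1 hb'
            (fun k => (q k).coeff 0) ?_
          have h1 : (Submodule.mkQ (θ 0 • ⊤ : Submodule A M)) (∑ k ∈ S, ev (q k) • b k) = 0 := by
            rw [hsum, map_zero]
          rw [map_sum] at h1
          rw [← h1]
          refine Finset.sum_congr rfl fun k _ => ?_
          rw [hdec k, add_smul, map_add]
          have h2 : (Submodule.mkQ (θ 0 • ⊤ : Submodule A M)) ((θ 0 * ev (q k).divX) • b k) = 0 := by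
            rw [Submodule.mkQ_apply, Submodule.Quotient.mk_eq_zero, mul_smul]
            exact Submodule.smul_mem_pointwise_smul _ _ _ trivial
          rw [h2, zero_add]; rfl
        have h1 : ∑ k ∈ S, ev (q k).divX • b k = 0 := by
          apply hreg0
          simp only [smul_zero]
          rw [Finset.smul_sum, ← hsum]
          refine Finset.sum_congr rfl fun k hk => ?_
          rw [hdec k, h0 k hk, map_zero, add_zero, mul_smul]
        have h2 := ihN (fun k => (q k).divX) (fun k hk n hn => by
          rw [Polynomial.coeff_divX]; exact hq k hk _ (by omega)) h1
        intro k hk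
        rw [← Polynomial.divX_mul_X_add (q k), h2 k hk, h0 k hk]; simp
    intro k hk
    have := key (S.sup fun k => (finSuccEquiv K d (p k)).natDegree + 1)
      (fun k => finSuccEquiv K d (p k)) (fun k hk n hn => by
        refine Polynomial.coeff_eq_zero_of_natDegree_lt ?_
        have := Finset.le_sup (f := fun k => (finSuccEquiv K d (p k)).natDegree + 1) hk
        omega) (by simpa only [hev] using hp) k hk
    exact (map_eq_zero_iff _ (finSuccEquiv K d).injective).1 this
end Indep

section Hilb
open RingTheory.Sequence

lemma finrank_map_add {K V W : Type*} [Field K] [AddCommGroup V] [Module K V] [AddCommGroup W]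
    [Module K W] (f : V →ₗ[K] W) (P : Submodule K V) [Module.Finite K P] :
    Module.finrank K (P.map f) + Module.finrank K (P ⊓ LinearMap.ker f : Submodule K V) =
      Module.finrank K P := by
  rw [← LinearMap.finrank_range_add_finrank_ker (f.domRestrict P), LinearMap.range_domRestrict]
  congr 1
  rw [LinearMap.ker_domRestrict, ← Submodule.map_comap_subtype]
  exact Submodule.finrank_map_subtype_eq P _

variable {K A : Type*} [Field K] [CommRing A] [Algebra K A]
    (𝒜 : ℕ → Submodule K A) [GradedAlgebra 𝒜]

lemma mem_sup_span_deg (I : Ideal A) (hI : I.IsHomogeneous 𝒜) (t : A) (ht : t ∈ 𝒜 1)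
    (n : ℕ) (x : A) (hx : x ∈ 𝒜 (n + 1)) (hxI : x ∈ I ⊔ Ideal.span {t}) :
    ∃ y ∈ I, y ∈ 𝒜 (n + 1) ∧ ∃ a ∈ 𝒜 n, x = y + t * a := by
  obtain ⟨y, hy, z, hz, rfl⟩ := Submodule.mem_sup.1 hxI
  obtain ⟨a, rfl⟩ := Ideal.mem_span_singleton'.1 hz
  refine ⟨DirectSum.decompose 𝒜 y (n + 1), hI _ hy, SetLike.coe_mem _,
    DirectSum.decompose 𝒜 a n, SetLike.coe_mem _, ?_⟩
  have h1 := DirectSum.decompose_of_mem_same 𝒜 hx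
  rw [← h1, DirectSum.decompose_add, DirectSum.add_apply, Submodule.coe_add, mul_comm a t,
    DirectSum.coe_decompose_mul_of_left_mem_of_le 𝒜 ht (Nat.succ_le_succ (Nat.zero_le n))]
  simp

/-- Hilbert function of `A / I`. -/
noncomputable def hf (I : Ideal A) (n : ℕ) : ℤ :=
  (Module.finrank K (𝒜 n) : ℤ) -
    Module.finrank K (𝒜 n ⊓ I.restrictScalars K : Submodule K A)

lemma hf_succ (hfin : ∀ i, Module.Finite K (𝒜 i)) (I : Ideal A) (hI : I.IsHomogeneous 𝒜) (t : A)
    (ht : t ∈ 𝒜 1) (hreg : ∀ a, t * a ∈ I → a ∈ I) (n : ℕ) :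
    hf 𝒜 (I ⊔ Ideal.span {t}) (n + 1) = hf 𝒜 I (n + 1) - hf 𝒜 I n := by
  have := hfin n
  have := hfin (n + 1)
  set Q := (I.restrictScalars K).mkQ with hQ
  have e1 := finrank_map_add (Q ∘ₗ LinearMap.mulLeft K t) (𝒜 n)
  have : Module.Finite K
      (𝒜 (n + 1) ⊓ (I ⊔ Ideal.span {t}).restrictScalars K : Submodule K A) :=
    Submodule.finiteDimensional_of_le inf_le_left
  have e2 := finrank_map_add Q (𝒜 (n + 1) ⊓ (I ⊔ Ideal.span {t}).restrictScalars K)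
  have k1 : 𝒜 n ⊓ LinearMap.ker (Q ∘ₗ LinearMap.mulLeft K t) = 𝒜 n ⊓ I.restrictScalars K := by
    ext x
    simp only [Submodule.mem_inf, LinearMap.mem_ker, LinearMap.comp_apply, hQ, Submodule.mkQ_apply,
      Submodule.Quotient.mk_eq_zero, LinearMap.mulLeft_apply, Submodule.restrictScalars_mem]
    exact and_congr_right fun _ => ⟨hreg x, fun h => I.mul_mem_left t h⟩
  have k2 : (𝒜 (n + 1) ⊓ (I ⊔ Ideal.span {t}).restrictScalars K) ⊓ LinearMap.ker Q =
      𝒜 (n + 1) ⊓ I.restrictScalars K := by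
    rw [hQ, Submodule.ker_mkQ, inf_assoc]
    congr 1
    refine inf_eq_right.2 fun x hx => ?_
    exact Submodule.mem_sup_left (S := I) (T := Ideal.span {t}) hx
  have k3 : (𝒜 (n + 1) ⊓ (I ⊔ Ideal.span {t}).restrictScalars K).map Q =
      (𝒜 n).map (Q ∘ₗ LinearMap.mulLeft K t) := by
    apply le_antisymm
    · rintro _ ⟨x, ⟨hx1, hx2⟩, rfl⟩
      obtain ⟨y, hy, -, a, ha, rfl⟩ := mem_sup_span_deg 𝒜 I hI t ht n x hx1 hx2
      refine ⟨a, ha, ?_⟩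
      have : Q y = 0 := by
        rw [hQ, Submodule.mkQ_apply, Submodule.Quotient.mk_eq_zero]; exact hy
      rw [map_add, this, zero_add]; rfl
    · rintro _ ⟨a, ha, rfl⟩
      refine ⟨t * a, ⟨?_, ?_⟩, rfl⟩
      · have := SetLike.mul_mem_graded ht ha
        rwa [add_comm] at this
      · exact Submodule.mem_sup_right (S := I) (T := Ideal.span {t})
          (Ideal.mul_mem_right _ _ (Ideal.mem_span_singleton_self t))
  rw [k1] at e1
  rw [k2, k3] at e2
  simp only [hf]
  omega

lemma hf_zero (I : Ideal A) (hI : I.IsHomogeneous 𝒜) (t : A) (ht : t ∈ 𝒜 1) :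
    hf 𝒜 (I ⊔ Ideal.span {t}) 0 = hf 𝒜 I 0 := by
  have : 𝒜 0 ⊓ (I ⊔ Ideal.span {t}).restrictScalars K = 𝒜 0 ⊓ I.restrictScalars K := by
    apply le_antisymm
    · rintro x ⟨hx, hx2⟩
      refine ⟨hx, ?_⟩
      obtain ⟨y, hy, z, hz, rfl⟩ := Submodule.mem_sup.1 hx2
      obtain ⟨a, rfl⟩ := Ideal.mem_span_singleton'.1 hz
      have h1 := DirectSum.decompose_of_mem_same 𝒜 hx
      rw [DirectSum.decompose_add, DirectSum.add_apply, Submodule.coe_add, mul_comm a t,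
        DirectSum.coe_decompose_mul_of_left_mem_of_not_le 𝒜 ht (by simp), add_zero] at h1
      rw [mul_comm a t, ← h1]
      exact hI _ hy
    · exact inf_le_inf_left _ fun x hx => Submodule.mem_sup_left (S := I) hx
  unfold hf
  rw [this]

lemma hf_series (hfin : ∀ i, Module.Finite K (𝒜 i)) (I : Ideal A) (hI : I.IsHomogeneous 𝒜) (t : A)
    (ht : t ∈ 𝒜 1) (hreg : ∀ a, t * a ∈ I → a ∈ I) :
    PowerSeries.mk (hf 𝒜 (I ⊔ Ideal.span {t})) = PowerSeries.mk (hf 𝒜 I) * (1 - PowerSeries.X) := by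
  ext n
  rw [mul_sub, mul_one, map_sub, PowerSeries.coeff_mk, PowerSeries.coeff_mk]
  cases n with
  | zero => simp [hf_zero 𝒜 I hI t ht]
  | succ n => rw [PowerSeries.coeff_succ_mul_X, PowerSeries.coeff_mk,
      hf_succ 𝒜 hfin I hI t ht hreg]

lemma hilb_quot (hfin : ∀ i, Module.Finite K (𝒜 i)) (d : ℕ) (θ : Fin d → A) (hθ : ∀ j, θ j ∈ 𝒜 1)
    (hreg : IsWeaklyRegular A (List.ofFn θ)) :
    PowerSeries.mk (hf 𝒜 (Ideal.span (Set.range θ))) =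
      (PowerSeries.mk fun i => (Module.finrank K (𝒜 i) : ℤ)) * (1 - PowerSeries.X) ^ d := by
  have main : ∀ j, j ≤ d → PowerSeries.mk (hf 𝒜 (Ideal.ofList ((List.ofFn θ).take j))) =
      (PowerSeries.mk fun i => (Module.finrank K (𝒜 i) : ℤ)) * (1 - PowerSeries.X) ^ j := by
    intro j
    induction j with
    | zero =>
      intro _
      rw [pow_zero, mul_one]
      congr 1
      funext i
      have : 𝒜 i ⊓ ((⊥ : Ideal A).restrictScalars K) = ⊥ := by simp
      rw [List.take_zero, Ideal.ofList_nil]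
      unfold hf
      rw [this]; simp
    | succ j ih =>
      intro hj
      have hlen : j < (List.ofFn θ).length := by simpa using hj
      rw [List.take_succ_eq_append_getElem hlen, Ideal.ofList_append, Ideal.ofList_singleton,
        hf_series 𝒜 hfin, ih (by omega), pow_succ, mul_assoc]
      · refine Ideal.homogeneous_span 𝒜 _ ?_
        intro x hx
        have := List.mem_of_mem_take hx
        obtain ⟨i, rfl⟩ := List.mem_ofFn.1 this
        exact ⟨1, hθ i⟩
      · simpa using hθ _
      · intro a ha
        have h1 := hreg.regular_mod_prev j hlen
        have h2 : (Ideal.ofList ((List.ofFn θ).take j) • ⊤ : Submodule A A) =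
          Ideal.ofList ((List.ofFn θ).take j) := by simp
        have h3 : (Submodule.Quotient.mk a :
            A ⧸ (Ideal.ofList ((List.ofFn θ).take j) • ⊤ : Submodule A A)) = 0 := by
          apply h1
          simp only [smul_zero]
          rw [← Submodule.Quotient.mk_smul, Submodule.Quotient.mk_eq_zero, h2]
          exact ha
        rwa [Submodule.Quotient.mk_eq_zero, h2] at h3
  have h1 := main d le_rfl
  rw [List.take_of_length_le (by simp)] at h1
  rw [← h1]
  congr 3
  ext x; simp [List.mem_ofFn]

lemma deg_le_of_hilb (hfin : ∀ i, Module.Finite K (𝒜 i)) (d : ℕ) (θ : Fin d → A)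
    (hθ : ∀ j, θ j ∈ 𝒜 1) (hreg : IsWeaklyRegular A (List.ofFn θ)) (h : Polynomial ℤ)
    (hh : (h : PowerSeries ℤ) =
      (PowerSeries.mk fun i => (Module.finrank K (𝒜 i) : ℤ)) * (1 - PowerSeries.X) ^ d)
    (e : ℕ) (he : h.natDegree < e) (x : A) (hx : x ∈ 𝒜 e) : x ∈ Ideal.span (Set.range θ) := by
  have := hfin e
  rw [← hilb_quot 𝒜 hfin d θ hθ hreg] at hh
  have h1 := congrArg (PowerSeries.coeff e) hh
  rw [Polynomial.coeff_coe, Polynomial.coeff_eq_zero_of_natDegree_lt he, PowerSeries.coeff_mk,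
    hf] at h1
  have h2 := Submodule.eq_of_le_of_finrank_eq
    (inf_le_left : 𝒜 e ⊓ (Ideal.span (Set.range θ)).restrictScalars K ≤ 𝒜 e) (by omega)
  rw [← h2] at hx
  exact hx.2
end Hilb

section Gen
universe u v
variable {K : Type u} {A : Type v} [Field K] [CommRing A] [Algebra K A]
    (𝒜 : ℕ → Submodule K A) [GradedAlgebra 𝒜]

lemma dec_sum {ι : Type*} (S : Finset ι) (f : ι → A) (n : ℕ) :
    (DirectSum.decompose 𝒜 (∑ i ∈ S, f i) n : A) = ∑ i ∈ S, (DirectSum.decompose 𝒜 (f i) n : A) := by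
  simp only [← GradedRing.proj_apply, map_sum]

lemma dec_sub (x y : A) (n : ℕ) :
    (DirectSum.decompose 𝒜 (x - y) n : A) =
      (DirectSum.decompose 𝒜 x n : A) - (DirectSum.decompose 𝒜 y n : A) := by
  simp only [← GradedRing.proj_apply, map_sub]

/-- `A` is spanned by a finite homogeneous basis of `A/(θ)` over the polynomial ring. -/
lemma exists_homog_basis (d : ℕ) (θ : Fin d → A)
    (hfinq : Module.Finite K (A ⧸ Ideal.span (Set.range θ))) :
    ∃ (ι : Type v) (_ : Fintype ι) (β : ι → A) (e : ι → ℕ), (∀ k, β k ∈ 𝒜 (e k)) ∧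
      (∀ c : ι → K, ∑ k, algebraMap K A (c k) * β k ∈ Ideal.span (Set.range θ) → ∀ k, c k = 0) ∧
      (∀ x : A, ∃ c : ι → K, x - ∑ k, algebraMap K A (c k) * β k ∈ Ideal.span (Set.range θ)) := by
  classical
  set J := Ideal.span (Set.range θ) with hJ
  let π : A →ₗ[K] A ⧸ J := (Ideal.Quotient.mkₐ K J).toLinearMap
  obtain ⟨b, hbs, hspan, hli⟩ := exists_linearIndependent K (Set.image π (⋃ n, (𝒜 n : Set A)))
  have htop : Submodule.span K b = ⊤ := by
    rw [hspan, Submodule.span_image]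
    have : Submodule.span K (⋃ n, (𝒜 n : Set A)) = ⊤ := by
      rw [eq_top_iff]
      intro x _
      rw [← DirectSum.sum_support_decompose 𝒜 x]
      exact Submodule.sum_mem _ fun i _ => Submodule.subset_span
        (Set.mem_iUnion.2 ⟨i, SetLike.coe_mem _⟩)
    rw [this, Submodule.map_top, LinearMap.range_eq_top]
    exact Ideal.Quotient.mk_surjective
  have hfinb : Finite b := hli.finite
  have hch : ∀ k : b, ∃ (x : A) (n : ℕ), x ∈ 𝒜 n ∧ π x = k := by
    intro k
    obtain ⟨x, hx, hxk⟩ := hbs k.2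
    obtain ⟨n, hn⟩ := Set.mem_iUnion.1 hx
    exact ⟨x, n, hn, hxk⟩
  choose β e hβ hπ using hch
  have hsum : ∀ c : b → K, (let := Fintype.ofFinite b
      π (∑ k, algebraMap K A (c k) * β k) = ∑ k, c k • (k : A ⧸ J)) := by
    intro c
    simp only [map_sum, ← Algebra.smul_def, map_smul, hπ]
  refine ⟨b, Fintype.ofFinite b, β, e, hβ, ?_, ?_⟩
  · intro c hc
    let := Fintype.ofFinite b
    have h1 : π (∑ k, algebraMap K A (c k) * β k) = 0 := Ideal.Quotient.eq_zero_iff_mem.2 hc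
    rw [hsum] at h1
    exact Fintype.linearIndependent_iff.1 hli c h1
  · intro x
    let := Fintype.ofFinite b
    have hx : π x ∈ Submodule.span K (Set.range ((↑) : b → A ⧸ J)) := by
      rw [Subtype.range_coe, htop]; trivial
    obtain ⟨c, hc⟩ := (Submodule.mem_span_range_iff_exists_fun K).1 hx
    refine ⟨c, ?_⟩
    rw [← Ideal.Quotient.eq_zero_iff_mem]
    change π _ = 0
    rw [map_sub, hsum, hc, sub_self]

lemma gen_homog (d : ℕ) (θ : Fin d → A) (hθ : ∀ j, θ j ∈ 𝒜 1) {ι : Type*} [Fintype ι]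
    (β : ι → A) (e : ι → ℕ) (hβ : ∀ k, β k ∈ 𝒜 (e k))
    (hgen : ∀ x : A, ∃ c : ι → K,
      x - ∑ k, algebraMap K A (c k) * β k ∈ Ideal.span (Set.range θ)) :
    ∀ (n : ℕ) (x : A), x ∈ 𝒜 n → ∃ p : ι → MvPolynomial (Fin d) K,
      (∀ k m, coeff m (p k) ≠ 0 → m.degree + e k = n) ∧ x = ∑ k, aeval θ (p k) * β k := by
  classical
  intro n
  induction n with
  | zero =>
    intro x hx
    obtain ⟨c, hc⟩ := hgen x
    obtain ⟨a, ha⟩ := Ideal.mem_span_range_iff_exists_fun.1 hc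
    refine ⟨fun k => if e k = 0 then C (c k) else 0, ?_, ?_⟩
    · intro k m hm
      by_cases hk : e k = 0
      · simp only [hk, if_true, coeff_C] at hm
        have : m = 0 := by
          by_contra h0
          exact hm (if_neg (Ne.symm h0))
        simp [this, hk]
      · simp [hk] at hm
    · have h1 := congrArg (fun y => (DirectSum.decompose 𝒜 y 0 : A)) ha
      simp only [dec_sum, dec_sub] at h1
      rw [DirectSum.decompose_of_mem_same 𝒜 hx, Finset.sum_eq_zero] at h1
      · rw [eq_comm, sub_eq_zero] at h1
        rw [h1]
        refine Finset.sum_congr rfl fun k _ => ?_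
        have hm : algebraMap K A (c k) * β k ∈ 𝒜 (e k) := by
          rw [← Algebra.smul_def]; exact Submodule.smul_mem _ _ (hβ k)
        beta_reduce
        by_cases hk : e k = 0
        · rw [if_pos hk, aeval_C]
          rw [hk] at hm
          exact DirectSum.decompose_of_mem_same 𝒜 hm
        · rw [if_neg hk, map_zero, zero_mul]
          exact DirectSum.decompose_of_mem_ne 𝒜 hm hk
      · intro j _
        rw [mul_comm]
        exact DirectSum.coe_decompose_mul_of_left_mem_of_not_le 𝒜 (hθ j) (by simp)
  | succ n ih =>
    intro x hx
    obtain ⟨c, hc⟩ := hgen x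
    obtain ⟨a, ha⟩ := Ideal.mem_span_range_iff_exists_fun.1 hc
    choose q hq1 hq2 using fun j => ih (DirectSum.decompose 𝒜 (a j) n : A) (SetLike.coe_mem _)
    refine ⟨fun k => (if e k = n + 1 then C (c k) else 0) + ∑ j, X j * q j k, ?_, ?_⟩
    · intro k m hm
      rw [coeff_add] at hm
      by_cases hz : coeff m (∑ j, X j * q j k) = 0
      · rw [hz, add_zero] at hm
        by_cases hk : e k = n + 1
        · simp only [hk, if_true, coeff_C] at hm
          have : m = 0 := by
            by_contra h0
            exact hm (if_neg (Ne.symm h0))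
          simp [this, hk]
        · simp [hk] at hm
      · rw [coeff_sum] at hz
        obtain ⟨j, -, hj⟩ := Finset.exists_ne_zero_of_sum_ne_zero hz
        rw [coeff_X_mul'] at hj
        have hjs : j ∈ m.support := by
          by_contra h0
          rw [if_neg h0] at hj; exact hj rfl
        rw [if_pos hjs] at hj
        have h1 := hq1 j k _ hj
        have h2 : m - Finsupp.single j 1 + Finsupp.single j 1 = m := by
          refine tsub_add_cancel_of_le ?_
          rw [Finsupp.single_le_iff]
          exact Nat.one_le_iff_ne_zero.2 (Finsupp.mem_support_iff.1 hjs)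
        have h3 := congrArg Finsupp.degree h2
        rw [map_add, Finsupp.degree_single] at h3
        omega
    · have h1 := congrArg (fun y => (DirectSum.decompose 𝒜 y (n + 1) : A)) ha
      simp only [dec_sum, dec_sub] at h1
      rw [DirectSum.decompose_of_mem_same 𝒜 hx, eq_comm, sub_eq_iff_eq_add'] at h1
      rw [h1]
      simp only [map_add, add_mul, Finset.sum_add_distrib]
      congr 1
      · refine Finset.sum_congr rfl fun k _ => ?_
        have hm : algebraMap K A (c k) * β k ∈ 𝒜 (e k) := by
          rw [← Algebra.smul_def]; exact Submodule.smul_mem _ _ (hβ k)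
        by_cases hk : e k = n + 1
        · rw [if_pos hk, aeval_C]
          rw [hk] at hm
          exact DirectSum.decompose_of_mem_same 𝒜 hm
        · rw [if_neg hk, map_zero, zero_mul]
          exact DirectSum.decompose_of_mem_ne 𝒜 hm hk
      · simp only [map_sum, Finset.sum_mul]
        rw [Finset.sum_comm]
        refine Finset.sum_congr rfl fun j _ => ?_
        rw [mul_comm, DirectSum.coe_decompose_mul_of_left_mem_of_le 𝒜 (hθ j)
          (Nat.succ_le_succ (Nat.zero_le n)), Nat.succ_sub_one, hq2 j, Finset.mul_sum]
        refine Finset.sum_congr rfl fun k _ => ?_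
        rw [map_mul, aeval_X, mul_assoc]

lemma gen_all (d : ℕ) (θ : Fin d → A) {ι : Type*} [Fintype ι] (β : ι → A) (e : ι → ℕ)
    (hgen : ∀ (n : ℕ) (x : A), x ∈ 𝒜 n → ∃ p : ι → MvPolynomial (Fin d) K,
      (∀ k m, coeff m (p k) ≠ 0 → m.degree + e k = n) ∧ x = ∑ k, aeval θ (p k) * β k) (x : A) :
    ∃ p : ι → MvPolynomial (Fin d) K, x = ∑ k, aeval θ (p k) * β k := by
  classical
  choose p _ hp2 using fun n => hgen n (DirectSum.decompose 𝒜 x n : A) (SetLike.coe_mem _)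
  refine ⟨fun k => ∑ n ∈ (DirectSum.decompose 𝒜 x).support, p n k, ?_⟩
  conv_lhs => rw [← DirectSum.sum_support_decompose 𝒜 x]
  simp only [map_sum, Finset.sum_mul]
  rw [Finset.sum_comm]
  exact Finset.sum_congr rfl fun n _ => hp2 n
end Gen

section Comp
variable {K A : Type*} [Field K] [CommRing A] [Algebra K A]
    (𝒜 : ℕ → Submodule K A) [GradedAlgebra 𝒜]

lemma comp_le {d : ℕ} (θ : Fin d → A) (r i : ℕ) (x : A)
    (hx : x ∈ veroneseLsopIdealComponent K 𝒜 θ r i) :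
    x ∈ Ideal.span (Set.range fun j => θ j ^ r) := by
  cases i with
  | zero =>
    have : x = 0 := hx
    rw [this]; exact Ideal.zero_mem _
  | succ i =>
    have h1 : veroneseLsopIdealComponent K 𝒜 θ r (i + 1) ≤
        (Ideal.span (Set.range fun j => θ j ^ r)).restrictScalars K := by
      refine iSup_le fun j => ?_
      rintro _ ⟨a, -, rfl⟩
      exact Ideal.mul_mem_right _ _ (Ideal.subset_span ⟨j, rfl⟩)
    exact h1 hx

lemma mem_comp {d : ℕ} (θ : Fin d → A) (hθ : ∀ j, θ j ∈ 𝒜 1) (r i : ℕ) (hr : 1 ≤ r) (x : A)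
    (hx : x ∈ 𝒜 (i * r)) (hxI : x ∈ Ideal.span (Set.range fun j => θ j ^ r)) :
    x ∈ veroneseLsopIdealComponent K 𝒜 θ r i := by
  have hθr : ∀ j, θ j ^ r ∈ 𝒜 r := fun j => by
    simpa using SetLike.pow_mem_graded r (hθ j)
  obtain ⟨a, rfl⟩ := Ideal.mem_span_range_iff_exists_fun.1 hxI
  have h1 := DirectSum.decompose_of_mem_same 𝒜 hx
  rw [dec_sum] at h1
  cases i with
  | zero =>
    change _ = (0 : A)
    rw [← h1]
    refine Finset.sum_eq_zero fun j _ => ?_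
    rw [mul_comm (a j)]
    exact DirectSum.coe_decompose_mul_of_left_mem_of_not_le 𝒜 (hθr j) (by rw [Nat.zero_mul]; omega)
  | succ i =>
    rw [← h1]
    refine Submodule.sum_mem _ fun j _ => ?_
    rw [mul_comm (a j), DirectSum.coe_decompose_mul_of_left_mem_of_le 𝒜 (hθr j)
      (Nat.le_mul_of_pos_left r (Nat.succ_pos i))]
    have h2 : (i + 1) * r - r = i * r := by rw [Nat.succ_mul]; omega
    rw [h2]
    exact Submodule.mem_iSup_of_mem j ⟨_, SetLike.coe_mem _, rfl⟩

lemma aeval_powI {d : ℕ} (θ : Fin d → A) (r : ℕ) (p : MvPolynomial (Fin d) K)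
    (hp : p ∈ powI K d r) : aeval θ p ∈ Ideal.span (Set.range fun j => θ j ^ r) := by
  have h1 : (powI K d r).map (aeval θ : MvPolynomial (Fin d) K →ₐ[K] A) ≤
      Ideal.span (Set.range fun j => θ j ^ r) := by
    rw [powI, Ideal.map_span, Ideal.span_le]
    rintro _ ⟨_, ⟨j, rfl⟩, rfl⟩
    refine Ideal.subset_span ⟨j, ?_⟩
    simp
  exact h1 (Ideal.mem_map_of_mem _ hp)
end Comp
end VeroneseLef

/-- **Theorem 1.1 (second part), Kubitzke–Murai.**
If moreover `r ≥ deg h_A(t)`, then `A_Θ^⟨r⟩` is almost strong Lefschetz: writing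
`A_Θ^⟨r⟩ = ⊕_{i=0}^σ (A_Θ^⟨r⟩)_i` with `(A_Θ^⟨r⟩)_σ ≠ 0` (the degree-`i` component being
`𝒜 (i*r) ⧸ veroneseLsopIdealComponent K 𝒜 θ r i`), the algebra `A_Θ^⟨r⟩` has the
`(σ-1)`-Lefschetz property: there is a linear form `w` (represented by an element of
`𝒜 r = (A^⟨r⟩)_1`) such that multiplication by `w^(σ-1-2i)` is injective from the degree-`i`
to the degree-`(σ-1-i)` component for `0 ≤ i ≤ ⌊(σ-2)/2⌋`. -/
theorem veronese_almost_strong_Lefschetz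
    (K : Type*) [Field K] [CharZero K]
    (A : Type*) [CommRing A] [Algebra K A]
    (𝒜 : ℕ → Submodule K A) [GradedAlgebra 𝒜]
    (hstd : ∀ i, 𝒜 i = 𝒜 1 ^ i)
    (hfin : ∀ i, Module.Finite K (𝒜 i))
    (d : ℕ) (hdim : ringKrullDim A = d)
    (hCM : ∀ θ' : Fin d → A, (∀ j, θ' j ∈ 𝒜 1) →
      Module.Finite K (A ⧸ Ideal.span (Set.range θ')) →
      RingTheory.Sequence.IsRegular A (List.ofFn θ'))
    (θ : Fin d → A) (hθ1 : ∀ j, θ j ∈ 𝒜 1)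
    (hθlsop : Module.Finite K (A ⧸ Ideal.span (Set.range θ)))
    (h : Polynomial ℤ)
    (hh : (h : PowerSeries ℤ) =
      (PowerSeries.mk fun i => (Module.finrank K (𝒜 i) : ℤ)) * (1 - PowerSeries.X) ^ d)
    (r : ℕ) (hr : 1 ≤ r) (hrdeg : h.natDegree ≤ r)
    (σ : ℕ)
    (hσtop : ¬ 𝒜 (σ * r) ≤ veroneseLsopIdealComponent K 𝒜 θ r σ)
    (hσvanish : ∀ i, σ < i → 𝒜 (i * r) ≤ veroneseLsopIdealComponent K 𝒜 θ r i) :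
    ∃ w ∈ 𝒜 r, ∀ i : ℕ, 2 * i + 1 ≤ σ - 1 →
      ∀ x ∈ 𝒜 (i * r),
        w ^ (σ - 1 - 2 * i) * x ∈ veroneseLsopIdealComponent K 𝒜 θ r (σ - 1 - i) →
          x ∈ veroneseLsopIdealComponent K 𝒜 θ r i := by
  classical
  have hreg := (hCM θ hθ1 hθlsop).toIsWeaklyRegular
  obtain ⟨ι, _, β, e, hβ, hind, hspan⟩ :=
    VeroneseLef.exists_homog_basis 𝒜 d θ hθlsop
  have hgen := VeroneseLef.gen_homog 𝒜 d θ hθ1 β e hβ hspan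
  have hall := VeroneseLef.gen_all 𝒜 d θ β e hgen
  have hofList : Ideal.ofList (List.ofFn θ) = Ideal.span (Set.range θ) := by
    refine congrArg Ideal.span (Set.ext fun x => ?_)
    simp [List.mem_ofFn]
  have hfree : ∀ p : ι → MvPolynomial (Fin d) K,
      ∑ k, MvPolynomial.aeval θ (p k) * β k = 0 → ∀ k, p k = 0 := by
    intro p hp k
    refine VeroneseLef.regular_indep (K := K) (A := A) Finset.univ d θ A β hreg ?_ p hp k
      (Finset.mem_univ k)
    intro c hc k _
    refine hind c ?_ k
    rw [hofList] at hc
    simpa using hc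
  have he : ∀ k, e k ≤ r := by
    intro k
    by_contra hcon
    have h1 := VeroneseLef.deg_le_of_hilb 𝒜 hfin d θ hθ1 hreg h hh (e k) (by omega) (β k) (hβ k)
    have h2 := hind (Pi.single k 1) (by simpa [Pi.single_apply] using h1) k
    simp at h2
  obtain ⟨s, rfl⟩ : ∃ s, r = s + 1 := ⟨r - 1, by omega⟩
  -- the bound on the socle degree
  have hσ : (σ - 1) * (s + 1) ≤ d * s := by
    by_contra! hcon
    apply hσtop
    intro x hx
    refine VeroneseLef.mem_comp 𝒜 θ hθ1 _ _ hr x hx ?_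
    obtain ⟨p, hp1, rfl⟩ := hgen _ x hx
    refine Ideal.sum_mem _ fun k _ => Ideal.mul_mem_right _ _ ?_
    refine VeroneseLef.aeval_powI θ _ _ (VeroneseLef.pigeon s _ fun m hm => ?_)
    have h1 := hp1 k m hm
    have h2 := he k
    obtain ⟨τ, rfl⟩ : ∃ τ, σ = τ + 1 := ⟨σ - 1, by
      rcases Nat.eq_zero_or_pos σ with h0 | h0
      · subst h0; simp at hcon
      · omega⟩
    rw [Nat.add_sub_cancel] at hcon
    rw [Nat.succ_mul] at h1
    omega
  have hell : MvPolynomial.aeval θ (VeroneseLef.ell : MvPolynomial (Fin d) K) = ∑ j, θ j := by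
    simp [VeroneseLef.ell]
  refine ⟨(∑ j, θ j) ^ (s + 1), ?_, ?_⟩
  · simpa using SetLike.pow_mem_graded (s + 1) (Submodule.sum_mem (𝒜 1) fun j _ => hθ1 j)
  intro i hi x hx hwx
  refine VeroneseLef.mem_comp 𝒜 θ hθ1 _ _ hr x hx ?_
  have h1 := VeroneseLef.comp_le 𝒜 θ _ _ _ hwx
  obtain ⟨p, hp1, rfl⟩ := hgen _ x hx
  obtain ⟨a, ha⟩ := Ideal.mem_span_range_iff_exists_fun.1 h1
  choose q hq using fun j => hall (a j)
  refine Ideal.sum_mem _ fun k _ => Ideal.mul_mem_right _ _ ?_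
  refine VeroneseLef.aeval_powI θ _ _ ?_
  have h2 := hfree (fun k => VeroneseLef.ell ^ ((s + 1) * (σ - 1 - 2 * i)) * p k -
      ∑ j, q j k * MvPolynomial.X j ^ (s + 1)) (by
    simp only [map_sub, map_mul, map_pow, map_sum, hell, MvPolynomial.aeval_X, sub_mul,
      Finset.sum_sub_distrib]
    rw [sub_eq_zero]
    rw [← pow_mul, Finset.mul_sum] at ha
    simp only [mul_assoc]
    rw [← ha]
    simp only [Finset.sum_mul]
    rw [Finset.sum_comm]
    refine Finset.sum_congr rfl fun j _ => ?_
    rw [hq j, Finset.sum_mul]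
    exact Finset.sum_congr rfl fun k _ => by ring) k
  by_cases hk : e k ≤ i * (s + 1)
  · refine VeroneseLef.lefschetz s (i * (s + 1) - e k) ((s + 1) * (σ - 1 - 2 * i)) (p k) ?_ ?_ ?_
    · intro m hm
      have h3 := hp1 k m hm
      have h4 : Finsupp.weight (1 : Fin d → ℕ) m = m.degree := by
        rw [Finsupp.degree_eq_weight_one]; rfl
      rw [h4]
      omega
    · obtain ⟨t, ht⟩ : ∃ t, σ - 1 = 2 * i + t := ⟨σ - 1 - 2 * i, by omega⟩
      rw [ht] at hσ ⊢
      rw [Nat.add_sub_cancel_left]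
      have h4 : (2 * i + t) * (s + 1) = 2 * (i * (s + 1)) + (s + 1) * t := by ring
      omega
    · rw [sub_eq_zero.1 h2]
      exact Ideal.sum_mem _ fun j _ => Ideal.mul_mem_left _ _ (Ideal.subset_span ⟨j, rfl⟩)
  · have : p k = 0 := by
      ext m
      by_contra hm
      have h3 := hp1 k m (by simpa using hm)
      omega
    rw [this]; exact Ideal.zero_mem _
end

section
/- Let K be a field of characteristic 0, let A be a Cohen-Macaulay standard graded K-algebra of even Krull dimension d with h-polynomial h_A(t), and let Θ = θ_1,…,θ_d be a linear system of parameters for A. If r ≥ max{d, 2·deg h_A(t) − d}, then A_Θ^⟨r⟩ has the weak Lefschetz property. -/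
namespace VWL
open MvPolynomial

section Lef
variable {K : Type*} [Field K] {d : ℕ}

/-- The ideal generated by the `r`-th powers of the variables. -/
noncomputable def J (K : Type*) [Field K] (d r : ℕ) : Ideal (MvPolynomial (Fin d) K) :=
  Ideal.span (Set.range fun j => (X j : MvPolynomial (Fin d) K) ^ r)

/-- The sum of the variables. -/
noncomputable def ell (K : Type*) [Field K] (d : ℕ) : MvPolynomial (Fin d) K := ∑ j, X j

/-- one summand of the lowering operator -/
noncomputable def lowerj (K : Type*) [Field K] {d : ℕ} (r : ℕ) (j : Fin d)
    (g : MvPolynomial (Fin d) K) : MvPolynomial (Fin d) K :=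
  ((r : MvPolynomial (Fin d) K) - 1) * pderiv j g - X j * pderiv j (pderiv j g)

/-- lowering operator of the sl2 action -/
noncomputable def lower (K : Type*) [Field K] {d : ℕ} (r : ℕ)
    (g : MvPolynomial (Fin d) K) : MvPolynomial (Fin d) K :=
  ∑ j, lowerj K r j g

lemma lowerj_add (r : ℕ) (j : Fin d) (f g : MvPolynomial (Fin d) K) :
    lowerj K r j (f + g) = lowerj K r j f + lowerj K r j g := by
  simp only [lowerj, map_add]; ring

lemma lower_add (r : ℕ) (f g : MvPolynomial (Fin d) K) :
    lower K r (f + g) = lower K r f + lower K r g := by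
  simp only [lower, lowerj_add, Finset.sum_add_distrib]

lemma lowerj_zero (r : ℕ) (j : Fin d) : lowerj K r j 0 = 0 := by
  simp [lowerj]

lemma pow_mem_J (r : ℕ) (j : Fin d) : (X j : MvPolynomial (Fin d) K) ^ r ∈ J K d r :=
  Ideal.subset_span ⟨j, rfl⟩

lemma lowerj_mul_mem (r : ℕ) (hr : 1 ≤ r) (i j : Fin d) (g : MvPolynomial (Fin d) K) :
    lowerj K r j (g * X i ^ r) ∈ J K d r := by
  obtain ⟨r, rfl⟩ := Nat.exists_eq_add_of_le' hr
  by_cases h : i = j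
  · subst h
    have : lowerj K (r+1) i (g * X i ^ (r+1)) =
       ((-(r:MvPolynomial (Fin d) K) - 2) * pderiv i g - X i * pderiv i (pderiv i g))
         * X i ^ (r+1) := by
      rcases r with _ | r
      · simp [lowerj, pderiv_mul, pderiv_X_self]
        ring
      · simp [lowerj, pderiv_mul, pderiv_pow, pderiv_X_self]
        ring
    rw [this]
    exact Ideal.mul_mem_left _ _ (pow_mem_J _ _)
  · have : lowerj K (r+1) j (g * X i ^ (r+1)) = lowerj K (r+1) j g * X i ^ (r+1) := by
      simp [lowerj, pderiv_mul, pderiv_pow, pderiv_X_of_ne (R := K) h]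
      ring
    rw [this]
    exact Ideal.mul_mem_left _ _ (pow_mem_J _ _)

lemma lower_mem (r : ℕ) (hr : 1 ≤ r) (g : MvPolynomial (Fin d) K) (hg : g ∈ J K d r) :
    lower K r g ∈ J K d r := by
  refine Ideal.sum_mem _ fun j _ => ?_
  rw [J, Ideal.mem_span_range_iff_exists_fun] at hg
  obtain ⟨c, rfl⟩ := hg
  induction (Finset.univ : Finset (Fin d)) using Finset.induction_on with
  | empty => simp [lowerj_zero]
  | insert a s ha ih =>
    rw [Finset.sum_insert ha, lowerj_add]
    exact add_mem (lowerj_mul_mem r hr a j _) ih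

lemma lower_homog (r p : ℕ) (g : MvPolynomial (Fin d) K) (hg : g.IsHomogeneous (p+1)) :
    (lower K r g).IsHomogeneous p := by
  refine IsHomogeneous.sum _ _ _ fun j _ => ?_
  refine IsHomogeneous.sub ?_ ?_
  · have : ((r : MvPolynomial (Fin d) K) - 1) = C ((r:K)-1) := by simp
    rw [this]
    have h1 := (isHomogeneous_C (Fin d) ((r:K)-1)).mul (hg.pderiv (i := j))
    rwa [zero_add, Nat.add_sub_cancel] at h1
  · rcases p with _ | p
    · have : pderiv j g = C (coeff 0 (pderiv j g)) := by
        have := (hg.pderiv (i := j))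
        simp only [zero_add, Nat.sub_self] at this
        rw [← totalDegree_zero_iff_isHomogeneous] at this
        exact totalDegree_eq_zero_iff_eq_C.1 this
      rw [this]
      simp [isHomogeneous_zero]
    · have := (isHomogeneous_X K j).mul ((hg.pderiv (i := j)).pderiv (i := j))
      have h1 : 1 + (p + 1 + 1 - 1 - 1) = p + 1 := by omega
      rwa [h1] at this

lemma lower_homog0 (r : ℕ) (g : MvPolynomial (Fin d) K) (hg : g.IsHomogeneous 0) :
    lower K r g = 0 := by
  rw [← totalDegree_zero_iff_isHomogeneous] at hg
  rw [totalDegree_eq_zero_iff_eq_C.1 hg]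
  simp [lower, lowerj]

lemma pderiv_ell (j : Fin d) : pderiv j (ell K d) = 1 := by
  simp [ell, pderiv_X, Pi.single_apply]

lemma lower_ell_mul (r q : ℕ) (g : MvPolynomial (Fin d) K) (hg : g.IsHomogeneous q) :
    lower K r (ell K d * g) = ell K d * lower K r g
      + C ((d:K) * ((r:K) - 1) - 2 * q) * g := by
  have h1 : ∀ j, lowerj K r j (ell K d * g) = ell K d * lowerj K r j g
     + ((r : MvPolynomial (Fin d) K) - 1) * g - 2 * (X j * pderiv j g) := by
    intro j
    simp only [lowerj, pderiv_mul, pderiv_ell, map_add, one_mul]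
    ring
  simp only [lower, h1, Finset.sum_sub_distrib, Finset.sum_add_distrib, ← Finset.mul_sum,
    hg.sum_X_mul_pderiv]
  have h2 : (C 2 : MvPolynomial (Fin d) K) = 2 := map_ofNat C 2
  simp [h2]
  ring

lemma ell_homog : (ell K d).IsHomogeneous 1 :=
  IsHomogeneous.sum _ _ _ fun j _ => isHomogeneous_X K j

lemma ell_pow_homog (k : ℕ) : (ell K d ^ k).IsHomogeneous k := by
  simpa using (ell_homog (K := K) (d := d)).pow k

lemma lower_ell_pow (r p k : ℕ) (g : MvPolynomial (Fin d) K) (hg : g.IsHomogeneous p) :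
    lower K r (ell K d ^ (k+1) * g) = ell K d ^ (k+1) * lower K r g
      + C (((k:K)+1) * ((d:K) * ((r:K) - 1) - 2 * p - k)) * (ell K d ^ k * g) := by
  induction k with
  | zero =>
    simpa using lower_ell_mul r p g hg
  | succ k ih =>
    rw [pow_succ', mul_assoc, lower_ell_mul r _ _ ((ell_pow_homog (k+1)).mul hg), ih]
    simp only [C_mul, C_add, C_sub, map_natCast, Nat.cast_add, Nat.cast_one, C_1, map_ofNat]
    ring

lemma C_mul_mem_cancel {I : Ideal (MvPolynomial (Fin d) K)} {c : K} (hc : c ≠ 0)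
    {g : MvPolynomial (Fin d) K} (h : C c * g ∈ I) : g ∈ I := by
  have := Ideal.mul_mem_left I (C c⁻¹) h
  rwa [← mul_assoc, ← C_mul, inv_mul_cancel₀ hc, C_1, one_mul] at this

lemma lef_inj [CharZero K] (r : ℕ) (hr : 1 ≤ r) (p : ℕ) : ∀ (k : ℕ) 
    (g : MvPolynomial (Fin d) K), g.IsHomogeneous p → 2 * p + k + d ≤ d * r →
    ell K d ^ k * g ∈ J K d r → g ∈ J K d r := by
  induction p with
  | zero =>
    intro k
    induction k with
    | zero => intro g _ _ h; simpa using h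
    | succ k ihk =>
      intro g hg hb h
      refine ihk g hg (by omega) ?_
      have h2 := lower_mem r hr _ h
      rw [lower_ell_pow r 0 k g hg, lower_homog0 r g hg, mul_zero, zero_add] at h2
      refine C_mul_mem_cancel ?_ h2
      refine mul_ne_zero (Nat.cast_add_one_ne_zero k) ?_
      intro h0
      have : ((d * r : ℕ) : K) = ((d + k : ℕ) : K) := by push_cast at h0 ⊢; linear_combination h0
      have := Nat.cast_injective this
      omega
  | succ p ihp =>
    intro k
    induction k with
    | zero => intro g _ _ h; simpa using h
    | succ k ihk =>
      intro g hg hb h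
      refine ihk g hg (by omega) ?_
      have h2 := lower_mem r hr _ h
      rw [lower_ell_pow r (p+1) k g hg] at h2
      have h3 : lower K r g ∈ J K d r := by
        refine ihp (k+2) _ (lower_homog r p g hg) (by omega) ?_
        have h4 := Ideal.mul_mem_left _ (ell K d) h2
        have h5 := Ideal.mul_mem_left _ (C (((k:K)+1) * ((d:K) * ((r:K) - 1) - 2 * (p+1:ℕ) - k))) h
        convert sub_mem h4 h5 using 1
        ring
      rw [Submodule.add_mem_iff_right _ (Ideal.mul_mem_left _ _ h3)] at h2
      refine C_mul_mem_cancel ?_ h2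
      refine mul_ne_zero (Nat.cast_add_one_ne_zero k) ?_
      intro h0
      have : ((d * r : ℕ) : K) = ((d + 2 * (p+1) + k : ℕ) : K) := by
        push_cast at h0 ⊢; linear_combination h0
      have := Nat.cast_injective this
      omega

lemma big_mem (r q : ℕ) (hr : 1 ≤ r) (hq : d * r < q + d) (g : MvPolynomial (Fin d) K)
    (hg : g.IsHomogeneous q) : g ∈ J K d r := by
  rw [g.as_sum]
  refine Ideal.sum_mem _ fun m hm => ?_
  have hdeg : m.degree = q := by
    have := hg (mem_support_iff.1 hm)
    rw [← this, Finsupp.degree_eq_weight_one]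
    rfl
  have : ∃ j, r ≤ m j := by
    by_contra! hcon
    have h1 : m.degree + d ≤ d * r := by
      rw [Finsupp.degree_eq_sum]
      calc ∑ j, m j + d = ∑ j : Fin d, (m j + 1) := by simp [Finset.sum_add_distrib]
        _ ≤ ∑ j : Fin d, r := Finset.sum_le_sum fun j _ => hcon j
        _ = d * r := by simp
    omega
  obtain ⟨j, hj⟩ := this
  refine Ideal.mem_of_dvd _ ?_ (pow_mem_J r j)
  rw [X_pow_eq_monomial, monomial_dvd_monomial]
  refine ⟨Or.inr ?_, by simp⟩
  simpa using hj

lemma lef_surj [CharZero K] (r : ℕ) (hr : 1 ≤ r) (n : ℕ) : ∀ (q : ℕ), d * r + 1 ≤ q + d + n →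
    ∀ p k : ℕ, q = p + k → d * r + k ≤ 2 * q + d →
    ∀ g : MvPolynomial (Fin d) K, g.IsHomogeneous q →
      ∃ f : MvPolynomial (Fin d) K, f.IsHomogeneous p ∧ g - ell K d ^ k * f ∈ J K d r := by
  induction n with
  | zero =>
    intro q hq p k _ _ g hg
    exact ⟨0, isHomogeneous_zero _ _ _, by simpa using big_mem r q hr (by omega) g hg⟩
  | succ n ihn =>
    intro q hq p k
    induction k generalizing p with
    | zero =>
      intro hp _ g hg
      exact ⟨g, by simpa [hp] using hg, by simp⟩
    | succ k ihk =>
      intro hp hb g hg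
      obtain ⟨H, hH, hgH⟩ := ihk (p+1) (by omega) (by omega) g hg
      obtain ⟨H', hH', hHH⟩ := ihn (q+1) (by omega) p (k+2) (by omega) (by omega)
        (ell K d ^ (k+1) * H) (by
          have := (ell_pow_homog (K := K) (d := d) (k+1)).mul hH
          convert this using 1; omega)
      have hl := lower_mem r hr _ hHH
      have hlow' : (ell K d * lower K r H').IsHomogeneous p := by
        rcases p with _ | p
        · rw [lower_homog0 r H' hH', mul_zero]; exact isHomogeneous_zero _ _ _
        · have := (ell_homog (K := K) (d := d)).mul (lower_homog r p H' hH')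
          rwa [add_comm] at this
      set c : K := ((k:K)+1) * ((d:K) * ((r:K) - 1) - 2 * (p+1 : ℕ) - k) with hc
      set c' : K := (((k+1 : ℕ):K)+1) * ((d:K) * ((r:K) - 1) - 2 * p - (k+1 : ℕ)) with hc'
      have hc0 : c ≠ 0 := by
        refine mul_ne_zero (Nat.cast_add_one_ne_zero k) ?_
        intro h0
        have : ((d * r : ℕ) : K) = ((d + 2 * (p+1) + k : ℕ) : K) := by
          push_cast at h0 ⊢; linear_combination h0
        have := Nat.cast_injective this
        omega
      have e1 : lower K r (ell K d ^ (k+1) * H - ell K d ^ (k+2) * H') =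
          ell K d ^ (k+1) * lower K r H + C c * (ell K d ^ k * H)
          - (ell K d ^ (k+2) * lower K r H' + C c' * (ell K d ^ (k+1) * H')) := by
        have h1 := lower_ell_pow r (p+1) k H hH
        have h2 := lower_ell_pow r p (k+1) H' hH'
        rw [← hc] at h1
        rw [← hc'] at h2
        rw [← h1, ← h2, eq_sub_iff_add_eq, ← lower_add, sub_add_cancel]
      rw [e1] at hl
      refine ⟨C c⁻¹ * (ell K d * lower K r H' + C c' * H' - lower K r H), ?_, ?_⟩
      · have := (isHomogeneous_C (Fin d) c⁻¹).mul ((hlow'.add ((show (C c' * H').IsHomogeneous p by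
          simpa using (isHomogeneous_C (Fin d) c').mul hH'))).sub (lower_homog r p H hH))
        simpa using this
      · have h3 := Ideal.mul_mem_left _ (C c⁻¹) hl
        have h4 := add_mem hgH h3
        have h5 : (C c⁻¹ * C c : MvPolynomial (Fin d) K) = 1 := by
          rw [← C_mul, inv_mul_cancel₀ hc0, C_1]
        convert h4 using 1
        linear_combination (-(ell K d ^ k * H)) * h5

end Lef
end VWL

namespace VWL
open MvPolynomial

section Indep
open scoped Pointwise

lemma X_zero_dvd {K : Type*} [Field K] {d : ℕ} (f : MvPolynomial (Fin (d+1)) K) :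
    ∃ g, f = rename Fin.succ (aeval (Fin.cons 0 X : Fin (d+1) → MvPolynomial (Fin d) K) f)
      + X 0 * g := by
  induction f using MvPolynomial.induction_on with
  | C a => exact ⟨0, by simp⟩
  | add p q hp hq =>
    obtain ⟨a, ha⟩ := hp
    obtain ⟨b, hb⟩ := hq
    refine ⟨a + b, ?_⟩
    rw [map_add, map_add]
    linear_combination ha + hb
  | mul_X p j hp =>
    obtain ⟨a, ha⟩ := hp
    refine Fin.cases ?_ (fun j => ?_) j
    · exact ⟨p, by simp [mul_comm]⟩
    · refine ⟨a * X j.succ, ?_⟩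
      simp only [map_mul, aeval_X, Fin.cons_succ, rename_X]
      linear_combination X j.succ * ha

lemma indep {K R : Type*} [Field K] [CommRing R] [Algebra K R] {ι : Type*} (d : ℕ) :
    ∀ {M : Type*} [AddCommGroup M] [Module R M] (θ : Fin d → R) (e : ι → M),
    RingTheory.Sequence.IsWeaklyRegular M (List.ofFn θ) →
    (∀ c : ι →₀ K, (c.sum fun b a => algebraMap K R a • e b) ∈
      (Ideal.span (Set.range θ) • (⊤ : Submodule R M)) → c = 0) →
    ∀ F : ι →₀ MvPolynomial (Fin d) K, (F.sum fun b f => aeval θ f • e b) = 0 → F = 0 := by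
  induction d with
  | zero =>
    intro M _ _ θ e _ hc F hF
    let c : ι →₀ K := F.mapRange (coeff 0) (by simp)
    have hFc : ∀ b, F b = C (c b) := fun b => by
      exact eq_C_of_isEmpty (F b)
    have h0 : c = 0 := by
      apply hc
      have : (c.sum fun b a => algebraMap K R a • e b) = (F.sum fun b f => aeval θ f • e b) := by
        refine (Finsupp.sum_mapRange_index (by simp)).trans ?_
        refine Finsupp.sum_congr fun b _ => ?_
        conv_rhs => rw [hFc b, aeval_C]
        rfl
      rw [this, hF]
      exact zero_mem _
    ext1 b
    rw [hFc b, h0]; simp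
  | succ d ih =>
    intro M _ _ θ e hreg hc
    rw [List.ofFn_succ, RingTheory.Sequence.isWeaklyRegular_cons_iff] at hreg
    obtain ⟨hreg0, hreg1⟩ := hreg
    let π : M →ₗ[R] QuotSMulTop (θ 0) M := Submodule.mkQ _
    have hπ : ∀ x, π (θ 0 • x) = 0 := fun x => by
      refine (Submodule.Quotient.mk_eq_zero _).2 ?_
      exact Submodule.smul_mem_pointwise_smul _ _ _ trivial
    have IH := ih (fun j => θ j.succ) (fun b => π (e b)) hreg1 (by
      intro c hcm
      apply hc
      have h1 : π (c.sum fun b a => algebraMap K R a • e b) ∈ 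
        Submodule.map π (Ideal.span (Set.range fun j : Fin d => θ j.succ) • (⊤ : Submodule R M)) := by
        rw [Submodule.map_smul'', Submodule.map_top, LinearMap.range_eq_top.2 (Submodule.mkQ_surjective _)]
        rw [map_finsuppSum]
        simpa only [map_smul] using hcm
      obtain ⟨y, hy, hyx⟩ := h1
      have h2 : (c.sum fun b a => algebraMap K R a • e b) - y ∈ θ 0 • (⊤ : Submodule R M) := by
        rw [← Submodule.Quotient.mk_eq_zero, Submodule.Quotient.mk_sub, sub_eq_zero]
        exact hyx.symm
      rw [← sub_add_cancel (c.sum fun b a => algebraMap K R a • e b) y]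
      refine add_mem ?_ (Submodule.smul_mono_left (Ideal.span_mono ?_) hy)
      · obtain ⟨z, _, hz⟩ := h2
        rw [← hz]
        exact Submodule.smul_mem_smul (Ideal.subset_span ⟨0, rfl⟩) trivial
      · rintro _ ⟨j, rfl⟩; exact ⟨j.succ, rfl⟩)
    have key : ∀ F : ι →₀ MvPolynomial (Fin (d+1)) K, (F.sum fun b f => aeval θ f • e b) = 0 →
        ∃ G : ι →₀ MvPolynomial (Fin (d+1)) K, (G.sum fun b f => aeval θ f • e b) = 0 ∧
          ∀ b, F b = X 0 * G b := by
      intro F hF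
      let ev : MvPolynomial (Fin (d+1)) K → MvPolynomial (Fin d) K := 
        fun f => aeval (Fin.cons 0 X : Fin (d+1) → MvPolynomial (Fin d) K) f
      have hF0 : F.mapRange ev (by simp [ev]) = 0 := by
        apply IH
        rw [Finsupp.sum_mapRange_index (by simp)]
        have := congrArg π hF
        rw [map_finsuppSum, map_zero] at this
        rw [← this]
        refine Finsupp.sum_congr fun b _ => ?_
        obtain ⟨g, hg⟩ := X_zero_dvd (F b)
        conv_rhs => rw [hg]
        rw [map_add, add_smul, map_add, map_mul, aeval_X, mul_smul, hπ, add_zero, aeval_rename,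
          map_smul]
        rfl
      have hdiv : ∀ b, ∃ g, F b = X 0 * g := fun b => by
        obtain ⟨g, hg⟩ := X_zero_dvd (F b)
        have : ev (F b) = 0 := by simpa using DFunLike.congr_fun hF0 b
        refine ⟨g, ?_⟩
        rw [hg]
        change rename Fin.succ (ev (F b)) + _ = _
        rw [this]; simp
      choose g hg using hdiv
      have hg0 : ∀ b, g b ≠ 0 → b ∈ F.support := fun b hb => by
        rw [Finsupp.mem_support_iff, hg b]
        exact mul_ne_zero (X_ne_zero _) hb
      refine ⟨Finsupp.onFinset F.support g hg0, ?_, fun b => hg b⟩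
      apply hreg0
      simp only [smul_zero]
      rw [Finsupp.onFinset_sum _ (by simp), Finset.smul_sum, ← hF]
      refine Finset.sum_congr rfl fun b _ => ?_
      simp only [hg b, map_mul, aeval_X, mul_smul]
    have fin : ∀ n : ℕ, ∀ F : ι →₀ MvPolynomial (Fin (d+1)) K, (∀ b, (F b).totalDegree < n) →
        (F.sum fun b f => aeval θ f • e b) = 0 → F = 0 := by
      intro n
      induction n with
      | zero => 
        intro F hF _
        ext1 b
        exact absurd (hF b) (by omega)
      | succ n ihn =>
        intro F hF h0
        obtain ⟨G, hG, hFG⟩ := key F h0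
        by_cases hn : n = 0
        · ext1 b
          have h1 := hF b
          rw [hFG b] at h1 ⊢
          by_cases hb : G b = 0
          · simp [hb]
          · rw [totalDegree_mul_of_isDomain (X_ne_zero _) hb, totalDegree_X] at h1
            omega
        have : G = 0 := ihn G (fun b => by
          have h1 := hF b
          rw [hFG b] at h1
          by_cases hb : G b = 0
          · simp [hb]; omega
          · rw [totalDegree_mul_of_isDomain (X_ne_zero _) hb, totalDegree_X] at h1
            omega) hG
        ext1 b
        rw [hFG b, this]; simp
    intro F hF
    refine fin ((F.support.sup fun b => (F b).totalDegree) + 1) F (fun b => ?_) hF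
    by_cases hb : b ∈ F.support
    · exact Nat.lt_succ_of_le (Finset.le_sup (f := fun b => (F b).totalDegree) hb)
    · rw [Finsupp.notMem_support_iff.1 hb]; simp

end Indep
end VWL

namespace VWL
open MvPolynomial

section Hilb
variable {K A : Type*} [Field K] [CommRing A] [Algebra K A]

lemma finrank_map_add {B : Type*} [AddCommGroup B] [Module K B] (U : Submodule K A)
    [Module.Finite K U] (f : A →ₗ[K] B) :
    Module.finrank K (U.map f) + Module.finrank K (LinearMap.ker f ⊓ U : Submodule K A)
      = Module.finrank K U := by
  rw [← LinearMap.finrank_range_add_finrank_ker (f.domRestrict U), LinearMap.range_domRestrict]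
  congr 1
  rw [LinearMap.ker_domRestrict, ← Submodule.finrank_map_subtype_eq]
  rw [Submodule.map_comap_subtype, inf_comm]

variable (𝒜 : ℕ → Submodule K A) [GradedAlgebra 𝒜]

/-- finrank of a graded component of an ideal -/
noncomputable def cdim (I : Ideal A) (n : ℕ) : ℕ :=
  Module.finrank K (I.restrictScalars K ⊓ 𝒜 n : Submodule K A)

lemma split_mem {I : Ideal A} (hI : I.IsHomogeneous 𝒜) {t : A} (ht : t ∈ 𝒜 1) {n : ℕ} {x : A}
    (hx : x ∈ 𝒜 (n+1)) (hxI : x ∈ I ⊔ Ideal.span {t}) :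
    ∃ z ∈ I, ∃ y ∈ 𝒜 n, x = z + t * y := by
  obtain ⟨z, hz, w, hw, rfl⟩ := Submodule.mem_sup.1 hxI
  obtain ⟨y, rfl⟩ := Ideal.mem_span_singleton'.1 hw
  refine ⟨_, hI (n+1) hz, _, (DirectSum.decompose 𝒜 y n).2, ?_⟩
  have h1 := DirectSum.decompose_of_mem_same 𝒜 hx
  rw [DirectSum.decompose_add, DirectSum.add_apply, Submodule.coe_add, mul_comm y t,
    DirectSum.coe_decompose_mul_of_left_mem_of_le 𝒜 ht (by omega : 1 ≤ n+1)] at h1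
  rw [mul_comm y t]
  exact h1.symm

lemma split_mem_zero {I : Ideal A} (hI : I.IsHomogeneous 𝒜) {t : A} (ht : t ∈ 𝒜 1) {x : A}
    (hx : x ∈ 𝒜 0) (hxI : x ∈ I ⊔ Ideal.span {t}) : x ∈ I := by
  obtain ⟨z, hz, w, hw, rfl⟩ := Submodule.mem_sup.1 hxI
  obtain ⟨y, rfl⟩ := Ideal.mem_span_singleton'.1 hw
  have h1 := DirectSum.decompose_of_mem_same 𝒜 hx
  rw [DirectSum.decompose_add, DirectSum.add_apply, Submodule.coe_add, mul_comm y t,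
    DirectSum.coe_decompose_mul_of_left_mem_of_not_le 𝒜 ht (by omega : ¬ 1 ≤ 0), add_zero] at h1
  rw [mul_comm y t, ← h1]
  exact hI 0 hz

lemma cdim_step (hfin : ∀ i, Module.Finite K (𝒜 i)) {I : Ideal A} (hI : I.IsHomogeneous 𝒜)
    {t : A} (ht : t ∈ 𝒜 1)
    (hreg : ∀ y, t * y ∈ I → y ∈ I) (n : ℕ) :
    cdim 𝒜 (I ⊔ Ideal.span {t}) (n+1) + cdim 𝒜 I n
      = cdim 𝒜 I (n+1) + Module.finrank K (𝒜 n) := by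
  have := hfin
  let π : A →ₗ[K] A ⧸ I.restrictScalars K := Submodule.mkQ _
  have hπ : ∀ x, π x = 0 ↔ x ∈ I := fun x => Submodule.Quotient.mk_eq_zero (I.restrictScalars K)
  let U : Submodule K A := (I ⊔ Ideal.span {t}).restrictScalars K ⊓ 𝒜 (n+1)
  have : Module.Finite K U :=
    Submodule.finiteDimensional_of_le (inf_le_right : U ≤ 𝒜 (n+1))
  have h1 := finrank_map_add (𝒜 n) (π.comp (LinearMap.mulLeft K t))
  have h2 := finrank_map_add U π
  have e1 : LinearMap.ker (π.comp (LinearMap.mulLeft K t)) ⊓ 𝒜 n = I.restrictScalars K ⊓ 𝒜 n := by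
    congr 1
    ext y
    simp only [LinearMap.mem_ker, LinearMap.comp_apply, LinearMap.mulLeft_apply, hπ]
    exact ⟨hreg y, fun h => I.mul_mem_left _ h⟩
  have e2 : LinearMap.ker π ⊓ U = I.restrictScalars K ⊓ 𝒜 (n+1) := by
    ext y
    simp only [Submodule.mem_inf, LinearMap.mem_ker, hπ, U, Submodule.restrictScalars_mem]
    exact ⟨fun h => ⟨h.1, h.2.2⟩, fun h => ⟨h.1, Ideal.mem_sup_left h.1, h.2⟩⟩
  have e3 : U.map π = (𝒜 n).map (π.comp (LinearMap.mulLeft K t)) := by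
    ext z
    constructor
    · rintro ⟨x, ⟨hxI, hx⟩, rfl⟩
      obtain ⟨z, hz, y, hy, rfl⟩ := split_mem 𝒜 hI ht hx hxI
      refine ⟨y, hy, ?_⟩
      simp [(hπ z).2 hz]
    · rintro ⟨y, hy, rfl⟩
      refine ⟨t * y, ⟨?_, ?_⟩, rfl⟩
      · exact Ideal.mem_sup_right (Ideal.mul_mem_right _ _ (Ideal.mem_span_singleton_self t))
      · have := SetLike.GradedMul.mul_mem ht hy
        rwa [add_comm] at this
  rw [e1] at h1
  rw [e2, e3] at h2
  simp only [cdim]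
  change Module.finrank K U + _ = _
  omega

lemma cdim_step_zero {I : Ideal A} (hI : I.IsHomogeneous 𝒜)
    {t : A} (ht : t ∈ 𝒜 1) :
    cdim 𝒜 (I ⊔ Ideal.span {t}) 0 = cdim 𝒜 I 0 := by
  have : ((I ⊔ Ideal.span {t}).restrictScalars K ⊓ 𝒜 0 : Submodule K A)
      = I.restrictScalars K ⊓ 𝒜 0 := by
    ext x
    simp only [Submodule.mem_inf, Submodule.restrictScalars_mem]
    exact ⟨fun h => ⟨split_mem_zero 𝒜 hI ht h.2 h.1, h.2⟩,
      fun h => ⟨Ideal.mem_sup_left h.1, h.2⟩⟩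
  rw [cdim, cdim, this]

lemma hilb (hfin : ∀ i, Module.Finite K (𝒜 i)) {d : ℕ} (θ : Fin d → A) (hθ1 : ∀ j, θ j ∈ 𝒜 1)
    (hreg : RingTheory.Sequence.IsWeaklyRegular A (List.ofFn θ)) (k : ℕ) (hk : k ≤ d) :
    (PowerSeries.mk fun i => (Module.finrank K (𝒜 i) : ℤ)) * (1 - PowerSeries.X) ^ k
    = PowerSeries.mk fun i => (Module.finrank K (𝒜 i) : ℤ)
        - cdim 𝒜 (Ideal.ofList ((List.ofFn θ).take k)) i := by
  induction k with
  | zero =>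
    have h0 : Ideal.ofList ((List.ofFn θ).take 0) = ⊥ := by simp [Ideal.ofList]
    rw [h0]
    ext i
    have h1 : ((⊥ : Ideal A).restrictScalars K ⊓ 𝒜 i : Submodule K A) = ⊥ := by simp
    rw [PowerSeries.coeff_mk, cdim, h1]
    simp
  | succ k ih =>
    have hk' : k < (List.ofFn θ).length := by simpa using hk
    have hI : (Ideal.ofList ((List.ofFn θ).take k)).IsHomogeneous 𝒜 := by
      refine Ideal.homogeneous_span _ _ fun x hx => ?_
      obtain ⟨j, rfl⟩ := List.mem_ofFn.1 (List.mem_of_mem_take hx)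
      exact ⟨1, hθ1 j⟩
    have e : Ideal.ofList ((List.ofFn θ).take (k+1)) =
      Ideal.ofList ((List.ofFn θ).take k) ⊔ Ideal.span {θ ⟨k, hk⟩} := by
      rw [← List.take_append_getElem hk', Ideal.ofList_append, Ideal.ofList_singleton]
      simp
    have hr : ∀ y, θ ⟨k, hk⟩ * y ∈ Ideal.ofList ((List.ofFn θ).take k) →
        y ∈ Ideal.ofList ((List.ofFn θ).take k) := by
      intro y hy
      have h1 := hreg.regular_mod_prev k hk'
      rw [isSMulRegular_quotient_iff_mem_of_smul_mem] at h1
      have := h1 y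
      simpa using this (by simpa using hy)
    rw [pow_succ, ← mul_assoc, ih (by omega), e]
    ext n
    rw [mul_sub, mul_one, map_sub]
    rcases n with _ | n
    · simp [cdim_step_zero 𝒜 hI (hθ1 ⟨k, hk⟩)]
    · rw [PowerSeries.coeff_succ_mul_X]
      simp only [PowerSeries.coeff_mk]
      have := cdim_step 𝒜 hfin hI (hθ1 ⟨k, hk⟩) hr n
      zify at this
      linarith

lemma top_vanish (hfin : ∀ i, Module.Finite K (𝒜 i)) {d : ℕ} (θ : Fin d → A)
    (hθ1 : ∀ j, θ j ∈ 𝒜 1)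
    (hreg : RingTheory.Sequence.IsWeaklyRegular A (List.ofFn θ))
    (h : Polynomial ℤ)
    (hh : (h : PowerSeries ℤ) =
      (PowerSeries.mk fun i => (Module.finrank K (𝒜 i) : ℤ)) * (1 - PowerSeries.X) ^ d)
    (a : ℕ) (ha : h.natDegree < a) (x : A) (hx : x ∈ 𝒜 a) : x ∈ Ideal.span (Set.range θ) := by
  have := hfin
  rw [hilb 𝒜 hfin θ hθ1 hreg d le_rfl, List.take_of_length_le (by simp)] at hh
  have h1 := congrArg (PowerSeries.coeff a) hh
  rw [Polynomial.coeff_coe, Polynomial.coeff_eq_zero_of_natDegree_lt ha, PowerSeries.coeff_mk] at h1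
  have e : Ideal.ofList (List.ofFn θ) = Ideal.span (Set.range θ) := by
    rw [Ideal.ofList]; congr 1; ext x; simp [List.mem_ofFn]
  rw [e] at h1
  have h2 : (Ideal.span (Set.range θ)).restrictScalars K ⊓ 𝒜 a = 𝒜 a := by
    refine Submodule.eq_of_le_of_finrank_eq inf_le_right ?_
    simp only [cdim] at h1
    omega
  rw [← h2] at hx
  exact hx.1

end Hilb

section Basis
universe u v
variable {K : Type u} {A : Type v} [Field K] [CommRing A] [Algebra K A]
variable (𝒜 : ℕ → Submodule K A) [GradedAlgebra 𝒜]

lemma exists_basis {I : Ideal A} (hI : I.IsHomogeneous 𝒜) :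
    ∃ (ι : Type v) (deg : ι → ℕ) (e : ι → A), (∀ b, e b ∈ 𝒜 (deg b)) ∧
      (∀ c : ι →₀ K, (c.sum fun b a => algebraMap K A a • e b) ∈ I → c = 0) ∧
      ∀ n, ∀ x ∈ 𝒜 n, ∃ c : ι →₀ K, (∀ b, c b ≠ 0 → deg b = n) ∧
        x - (c.sum fun b a => algebraMap K A a • e b) ∈ I := by
  classical
  let N : ∀ n, Submodule K (𝒜 n) := fun n => (I.restrictScalars K).comap (𝒜 n).subtype
  let B : ∀ n, Module.Basis _ K (𝒜 n ⧸ N n) := fun n => Module.Basis.ofVectorSpace K (𝒜 n ⧸ N n)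
  let ev : (b : Σ n, Module.Basis.ofVectorSpaceIndex K (𝒜 n ⧸ N n)) → 𝒜 b.1 :=
    fun b => (Submodule.mkQ_surjective (N b.1) (B b.1 b.2)).choose
  have hev : ∀ b, (N b.1).mkQ (ev b) = B b.1 b.2 := fun b =>
    (Submodule.mkQ_surjective (N b.1) (B b.1 b.2)).choose_spec
  refine ⟨Σ n, Module.Basis.ofVectorSpaceIndex K (𝒜 n ⧸ N n), fun b => b.1, fun b => ev b,
    fun b => (ev b).2, ?_, ?_⟩
  · intro c hc
    let P : ∀ n, A →ₗ[K] (𝒜 n ⧸ N n) := fun n => (N n).mkQ.comp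
      ((DirectSum.component K ℕ (fun i => 𝒜 i) n).comp
        (DirectSum.decomposeLinearEquiv 𝒜).toLinearMap)
    have hP : ∀ n x, P n x = (N n).mkQ (DirectSum.decompose 𝒜 x n) := fun n x => rfl
    have hPI : ∀ n, ∀ x ∈ I, P n x = 0 := fun n x hx => by
      rw [hP]
      exact (Submodule.Quotient.mk_eq_zero _).2 (hI n hx)
    have hPe : ∀ n b, n ≠ b.1 → P n (ev b) = 0 := fun n b hnb => by
      rw [hP]
      have : DirectSum.decompose 𝒜 (ev b : A) n = 0 := by
        apply Subtype.ext
        exact DirectSum.decompose_of_mem_ne 𝒜 (ev b).2 hnb.symm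
      rw [this, map_zero]
    have hPe' : ∀ b, P b.1 (ev b) = B b.1 b.2 := fun b => by
      rw [hP, ← hev]
      congr 1
      apply Subtype.ext
      exact DirectSum.decompose_of_mem_same 𝒜 (ev b).2
    ext ⟨n, j⟩
    have h1 := congrArg ((B n).coord j) (hPI n _ hc)
    rw [map_finsuppSum, map_finsuppSum, Finsupp.sum, Finset.sum_eq_single ⟨n, j⟩] at h1
    · rw [algebraMap_smul, map_smul, hPe' ⟨n, j⟩] at h1
      simpa using h1
    · rintro ⟨m, l⟩ _ hne
      rw [algebraMap_smul, map_smul]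
      by_cases hmn : n = m
      · subst hmn
        rw [hPe' ⟨n, l⟩]
        have : l ≠ j := fun h => hne (by rw [h])
        simp [Finsupp.single_apply, this]
      · rw [hPe n ⟨m, l⟩ hmn]; simp
    · intro h
      rw [Finsupp.notMem_support_iff.1 h]; simp
  · intro n x hx
    let c0 := (B n).repr ((N n).mkQ ⟨x, hx⟩)
    refine ⟨c0.mapDomain (fun j => ⟨n, j⟩), ?_, ?_⟩
    · rintro b hb
      have := Finsupp.mapDomain_support (Finsupp.mem_support_iff.2 hb)
      obtain ⟨j, _, rfl⟩ := Finset.mem_image.1 this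
      rfl
    · rw [Finsupp.sum_mapDomain_index (by simp) (by simp [add_smul, add_mul])]
      have h1 : (N n).mkQ (⟨x, hx⟩ - c0.sum fun j a => a • ev ⟨n, j⟩) = 0 := by
        rw [map_sub, map_finsuppSum]
        rw [sub_eq_zero]
        refine ((B n).linearCombination_repr _).symm.trans ?_
        rw [Finsupp.linearCombination_apply]
        refine Finsupp.sum_congr fun j _ => ?_
        rw [map_smul, hev ⟨n, j⟩]
      have h2 := (Submodule.Quotient.mk_eq_zero (N n)).1 h1
      have h3 : ((𝒜 n).subtype (⟨x, hx⟩ - c0.sum fun j a => a • ev ⟨n, j⟩)) ∈ I := h2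
      rw [map_sub, map_finsuppSum] at h3
      simpa only [map_smul, algebraMap_smul, Submodule.subtype_apply] using h3

end Basis
end VWL

namespace VWL
open MvPolynomial

section Final
variable {K : Type*} [Field K] {A : Type*} [CommRing A] [Algebra K A] {ι : Type*} {d : ℕ}

/-- The evaluation map of a finitely supported family of polynomials. -/
noncomputable def Phi (θ : Fin d → A) (e : ι → A) (F : ι →₀ MvPolynomial (Fin d) K) : A :=
  F.sum fun b f => aeval θ f • e b

lemma Phi_add (θ : Fin d → A) (e : ι → A) (F G : ι →₀ MvPolynomial (Fin d) K) :
    Phi θ e (F + G) = Phi θ e F + Phi θ e G := by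
  classical
  exact Finsupp.sum_add_index' (by simp) (by simp [add_mul])

lemma Phi_smul (θ : Fin d → A) (e : ι → A) (g : MvPolynomial (Fin d) K)
    (F : ι →₀ MvPolynomial (Fin d) K) :
    Phi θ e (g • F) = aeval θ g * Phi θ e F := by
  rw [Phi, Finsupp.sum_smul_index (by simp), Phi, Finsupp.mul_sum]
  simp [mul_assoc]

lemma Phi_sub (θ : Fin d → A) (e : ι → A) (F G : ι →₀ MvPolynomial (Fin d) K) :
    Phi θ e (F - G) = Phi θ e F - Phi θ e G := by
  rw [eq_sub_iff_add_eq, ← Phi_add, sub_add_cancel]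

lemma Phi_zero (θ : Fin d → A) (e : ι → A) :
    Phi θ e (0 : ι →₀ MvPolynomial (Fin d) K) = 0 := by simp [Phi]

variable (𝒜 : ℕ → Submodule K A) [GradedAlgebra 𝒜]

/-- `f` has degree `n - a` -/
def T (n a : ℕ) (f : MvPolynomial (Fin d) K) : Prop :=
  f = 0 ∨ ∃ m, m + a = n ∧ f.IsHomogeneous m

lemma T_add {n a : ℕ} {f g : MvPolynomial (Fin d) K} (hf : T n a f) (hg : T n a g) :
    T n a (f + g) := by
  rcases hf with rfl | ⟨m, hm, hf⟩
  · simpa using hg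
  rcases hg with rfl | ⟨m', hm', hg⟩
  · rw [add_zero]; exact Or.inr ⟨m, hm, hf⟩
  · obtain rfl : m = m' := by omega
    exact Or.inr ⟨m, hm, hf.add hg⟩

lemma aeval_mem (θ : Fin d → A) (hθ1 : ∀ j, θ j ∈ 𝒜 1) {m : ℕ} {f : MvPolynomial (Fin d) K}
    (hf : f.IsHomogeneous m) : aeval θ f ∈ 𝒜 m := by
  rw [aeval_def, eval₂_eq']
  refine sum_mem fun s hs => ?_
  rw [← Algebra.smul_def]
  refine Submodule.smul_mem _ _ ?_
  have hdeg : ∑ j, s j = m := by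
    have := hf (mem_support_iff.1 hs)
    rw [← this, Finsupp.weight_apply, Finsupp.sum_fintype _ _ (by simp)]
    simp
  rw [← hdeg]
  refine SetLike.prod_mem_graded 𝒜 _ _ fun j _ => ?_
  have := SetLike.pow_mem_graded (A := 𝒜) (s j) (hθ1 j)
  simpa using this

lemma Phi_mem (θ : Fin d → A) (hθ1 : ∀ j, θ j ∈ 𝒜 1) (e : ι → A) (deg : ι → ℕ)
    (he : ∀ b, e b ∈ 𝒜 (deg b)) {n : ℕ} (F : ι →₀ MvPolynomial (Fin d) K)
    (hF : ∀ b, T n (deg b) (F b)) : Phi θ e F ∈ 𝒜 n := by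
  refine sum_mem fun b _ => ?_
  rcases hF b with h | ⟨m, hm, h⟩
  · simp [h]
  · rw [← hm]
    exact SetLike.GradedMul.mul_mem (aeval_mem 𝒜 θ hθ1 h) (he b)

lemma aeval_J (θ : Fin d → A) (r : ℕ) {f : MvPolynomial (Fin d) K} (hf : f ∈ J K d r) :
    aeval θ f ∈ Ideal.span (Set.range fun j => θ j ^ r) := by
  have h1 : J K d r ≤ (Ideal.span (Set.range fun j => θ j ^ r)).comap (aeval (R := K) θ) := by
    rw [J, Ideal.span_le]
    rintro _ ⟨j, rfl⟩
    simp only [SetLike.mem_coe, Ideal.mem_comap, map_pow, aeval_X]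
    exact Ideal.subset_span ⟨j, rfl⟩
  exact h1 hf

lemma Phi_J (θ : Fin d → A) (e : ι → A) (r : ℕ) (F : ι →₀ MvPolynomial (Fin d) K)
    (hF : ∀ b, F b ∈ J K d r) : Phi θ e F ∈ Ideal.span (Set.range fun j => θ j ^ r) :=
  sum_mem fun b _ => Ideal.mul_mem_right _ _ (aeval_J θ r (hF b))

/-- homogeneous members of an ideal generated by homogeneous elements of degree `r` -/
lemma homog_span (t : Fin d → A) (r n : ℕ) (ht : ∀ j, t j ∈ 𝒜 r) {x : A}
    (hx : x ∈ 𝒜 (n + r)) (hxI : x ∈ Ideal.span (Set.range t)) :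
    ∃ y : Fin d → A, (∀ j, y j ∈ 𝒜 n) ∧ x = ∑ j, t j * y j := by
  obtain ⟨c, rfl⟩ := Ideal.mem_span_range_iff_exists_fun.1 hxI
  refine ⟨fun j => DirectSum.decompose 𝒜 (c j) n, fun j => SetLike.coe_mem _, ?_⟩
  have h1 := DirectSum.decompose_of_mem_same 𝒜 hx
  rw [DirectSum.decompose_sum, DFinsupp.finsetSum_apply, AddSubmonoidClass.coe_finsetSum] at h1
  rw [← h1]
  refine Finset.sum_congr rfl fun j _ => ?_
  rw [mul_comm, DirectSum.coe_decompose_mul_of_left_mem_of_le 𝒜 (ht j) (by omega : r ≤ n + r),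
    Nat.add_sub_cancel]

lemma homog_span_zero (t : Fin d → A) (r n : ℕ) (ht : ∀ j, t j ∈ 𝒜 r) (hn : n < r) {x : A}
    (hx : x ∈ 𝒜 n) (hxI : x ∈ Ideal.span (Set.range t)) : x = 0 := by
  obtain ⟨c, rfl⟩ := Ideal.mem_span_range_iff_exists_fun.1 hxI
  have h1 := DirectSum.decompose_of_mem_same 𝒜 hx
  rw [DirectSum.decompose_sum, DFinsupp.finsetSum_apply, AddSubmonoidClass.coe_finsetSum] at h1
  rw [← h1]
  refine Finset.sum_eq_zero fun j _ => ?_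
  rw [mul_comm, DirectSum.coe_decompose_mul_of_left_mem_of_not_le 𝒜 (ht j) (by omega)]

lemma gen (θ : Fin d → A) (hθ1 : ∀ j, θ j ∈ 𝒜 1) (e : ι → A) (deg : ι → ℕ)
    (he : ∀ b, e b ∈ 𝒜 (deg b))
    (hgen : ∀ n, ∀ x ∈ 𝒜 n, ∃ c : ι →₀ K, (∀ b, c b ≠ 0 → deg b = n) ∧
        x - (c.sum fun b a => algebraMap K A a • e b) ∈ Ideal.span (Set.range θ)) (n : ℕ) :
    ∀ x ∈ 𝒜 n, ∃ F : ι →₀ MvPolynomial (Fin d) K, (∀ b, T n (deg b) (F b)) ∧ Phi θ e F = x := by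
  induction n with
  | zero =>
    intro x hx
    obtain ⟨c, hc, hcx⟩ := hgen 0 x hx
    have hT : ∀ b, T 0 (deg b) (c.mapRange (C (σ := Fin d)) (by simp) b) := fun b => by
      by_cases hb : c b = 0
      · left; simp [hb]
      · right; exact ⟨0, by simpa using hc b hb, isHomogeneous_C _ _⟩
    have hP : Phi θ e (c.mapRange (C (σ := Fin d)) (by simp)) =
        (c.sum fun b a => algebraMap K A a • e b) := by
      rw [Phi, Finsupp.sum_mapRange_index (by simp)]
      simp
    refine ⟨_, hT, ?_⟩
    rw [← hP] at hcx
    have := homog_span_zero 𝒜 θ 1 0 hθ1 (by omega)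
      (sub_mem hx (Phi_mem 𝒜 θ hθ1 e deg he _ hT)) hcx
    exact (sub_eq_zero.1 this).symm
  | succ n ih =>
    intro x hx
    obtain ⟨c, hc, hcx⟩ := hgen (n+1) x hx
    have hT : ∀ b, T (n+1) (deg b) (c.mapRange (C (σ := Fin d)) (by simp) b) := fun b => by
      by_cases hb : c b = 0
      · left; simp [hb]
      · right; exact ⟨0, by simpa using hc b hb, isHomogeneous_C _ _⟩
    have hP : Phi θ e (c.mapRange (C (σ := Fin d)) (by simp)) =
        (c.sum fun b a => algebraMap K A a • e b) := by
      rw [Phi, Finsupp.sum_mapRange_index (by simp)]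
      simp
    rw [← hP] at hcx
    obtain ⟨y, hy, hxy⟩ := homog_span 𝒜 θ 1 n hθ1
      (sub_mem hx (Phi_mem 𝒜 θ hθ1 e deg he _ hT)) hcx
    choose G hG hGy using fun j => ih (y j) (hy j)
    have hS : ∀ s : Finset (Fin d), ∃ F : ι →₀ MvPolynomial (Fin d) K,
        (∀ b, T (n+1) (deg b) (F b)) ∧ Phi θ e F = ∑ j ∈ s, θ j * y j := by
      intro s
      induction s using Finset.induction_on with
      | empty => exact ⟨0, fun b => Or.inl rfl, by simp [Phi_zero]⟩
      | insert j s hj ihs =>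
        obtain ⟨F, hF, hFs⟩ := ihs
        refine ⟨(X j : MvPolynomial (Fin d) K) • G j + F, fun b => ?_, ?_⟩
        · refine T_add ?_ (hF b)
          rcases hG j b with h | ⟨m, hm, h⟩
          · left; simp [h]
          · right
            refine ⟨1 + m, by omega, ?_⟩
            exact (isHomogeneous_X K j).mul h
        · rw [Phi_add, Phi_smul, aeval_X, hGy, hFs, Finset.sum_insert hj]
    obtain ⟨F, hF, hFs⟩ := hS Finset.univ
    refine ⟨_ + F, fun b => T_add (hT b) (hF b), ?_⟩
    rw [Phi_add, hFs, ← hxy]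
    ring

lemma comp_of_span (θ : Fin d → A) (hθ1 : ∀ j, θ j ∈ 𝒜 1) (r : ℕ) (hr : 1 ≤ r) (i : ℕ) {x : A}
    (hx : x ∈ 𝒜 (i * r)) (hxI : x ∈ Ideal.span (Set.range fun j => θ j ^ r)) :
    x ∈ veroneseLsopIdealComponent K 𝒜 θ r i := by
  have ht : ∀ j, θ j ^ r ∈ 𝒜 r := fun j => by
    have := SetLike.pow_mem_graded (A := 𝒜) r (hθ1 j)
    simpa using this
  rcases i with _ | i
  · rw [homog_span_zero 𝒜 _ r (0 * r) ht (by omega) hx hxI]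
    exact zero_mem _
  · rw [Nat.succ_mul] at hx
    obtain ⟨y, hy, rfl⟩ := homog_span 𝒜 _ r (i * r) ht hx hxI
    refine sum_mem fun j _ => ?_
    refine Submodule.mem_iSup_of_mem j ?_
    exact ⟨y j, hy j, rfl⟩

end Final
end VWL


/-- **Theorem 1.2(ii), Kubitzke–Murai.**
Let `A` be a Cohen-Macaulay standard graded `K`-algebra of even Krull dimension `d` over a
field of characteristic `0`, `Θ = θ₁,…,θ_d` an l.s.o.p. for `A`, and
`r ≥ max{d, 2 deg h_A(t) - d}`.  Then `A_Θ^⟨r⟩` (whose degree-`i` component is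
`𝒜 (i*r) ⧸ veroneseLsopIdealComponent K 𝒜 θ r i`) has the weak Lefschetz property: there is
a linear form `w` (represented by an element of `𝒜 r = (A^⟨r⟩)_1`) such that multiplication
by `w` from the degree-`i` to the degree-`(i+1)` component is injective or surjective for
every `i ≥ 0`. -/
theorem veronese_weak_Lefschetz_even
    (K : Type*) [Field K] [CharZero K]
    (A : Type*) [CommRing A] [Algebra K A]
    (𝒜 : ℕ → Submodule K A) [GradedAlgebra 𝒜]
    (hstd : ∀ i, 𝒜 i = 𝒜 1 ^ i)
    (hfin : ∀ i, Module.Finite K (𝒜 i))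
    (d : ℕ) (hdeven : Even d) (hdim : ringKrullDim A = d)
    (hCM : ∀ θ' : Fin d → A, (∀ j, θ' j ∈ 𝒜 1) →
      Module.Finite K (A ⧸ Ideal.span (Set.range θ')) →
      RingTheory.Sequence.IsRegular A (List.ofFn θ'))
    (θ : Fin d → A) (hθ1 : ∀ j, θ j ∈ 𝒜 1)
    (hθlsop : Module.Finite K (A ⧸ Ideal.span (Set.range θ)))
    (h : Polynomial ℤ)
    (hh : (h : PowerSeries ℤ) =
      (PowerSeries.mk fun i => (Module.finrank K (𝒜 i) : ℤ)) * (1 - PowerSeries.X) ^ d)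
    (r : ℕ) (hr : 1 ≤ r) (hrbound : max d (2 * h.natDegree - d) ≤ r) :
    ∃ w ∈ 𝒜 r, ∀ i : ℕ,
      (∀ x ∈ 𝒜 (i * r),
        w * x ∈ veroneseLsopIdealComponent K 𝒜 θ r (i + 1) →
          x ∈ veroneseLsopIdealComponent K 𝒜 θ r i) ∨
      (∀ y ∈ 𝒜 ((i + 1) * r), ∃ x ∈ 𝒜 (i * r),
        y - w * x ∈ veroneseLsopIdealComponent K 𝒜 θ r (i + 1)) := by
  classical
  have hreg := (hCM θ hθ1 hθlsop).toIsWeaklyRegular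
  have hIh : (Ideal.span (Set.range θ)).IsHomogeneous 𝒜 := by
    refine Ideal.homogeneous_span _ _ ?_
    rintro _ ⟨j, rfl⟩
    exact ⟨1, hθ1 j⟩
  obtain ⟨ι, deg, e, he, hind, hgen⟩ := VWL.exists_basis 𝒜 hIh
  have hdeg : ∀ b, deg b ≤ h.natDegree := by
    intro b
    by_contra! hb
    have h1 := VWL.top_vanish 𝒜 hfin θ hθ1 hreg h hh _ hb _ (he b)
    have h2 := hind (Finsupp.single b 1) (by simpa using h1)
    simp at h2
  have hinj := VWL.indep (K := K) d θ e hreg (by simpa using hind)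
  have hG := VWL.gen 𝒜 θ hθ1 e deg he hgen
  have hell : ∀ k, (MvPolynomial.aeval θ) (VWL.ell K d ^ k) ∈ 𝒜 k := fun k =>
    VWL.aeval_mem 𝒜 θ hθ1 (VWL.ell_pow_homog k)
  have hd1 : d ≤ r := le_trans (le_max_left _ _) hrbound
  have hd2 : 2 * h.natDegree ≤ r + d := by
    have := le_trans (le_max_right _ _) hrbound
    omega
  refine ⟨MvPolynomial.aeval θ (VWL.ell K d ^ r), hell r, fun i => ?_⟩
  by_cases hi : d ≤ 2 * i
  · right
    intro y hy
    obtain ⟨F, hF, rfl⟩ := hG _ y hy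
    have hmul : d * r ≤ 2 * (i * r) := by
      calc d * r ≤ (2 * i) * r := Nat.mul_le_mul_right _ hi
        _ = 2 * (i * r) := by ring
    have hex : ∀ b, ∃ f : MvPolynomial (Fin d) K, VWL.T (i * r) (deg b) f ∧ (f ≠ 0 → F b ≠ 0) ∧
        F b - VWL.ell K d ^ r * f ∈ VWL.J K d r := by
      intro b
      have hb := hdeg b
      by_cases h0 : F b = 0
      · exact ⟨0, Or.inl rfl, by simp, by simp [h0]⟩
      rcases hF b with h1 | ⟨q, hq, h1⟩
      · exact absurd h1 h0
      rw [Nat.succ_mul] at hq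
      by_cases hp : deg b ≤ i * r
      · obtain ⟨f, hf, hfJ⟩ := VWL.lef_surj r hr (d * r + 1) q (by omega) (i * r - deg b) r
          (by omega) (by omega) (F b) h1
        exact ⟨f, Or.inr ⟨_, by omega, hf⟩, fun _ => h0, hfJ⟩
      · refine ⟨0, Or.inl rfl, by simp, ?_⟩
        simpa using VWL.big_mem r q hr (by omega) (F b) h1
    choose f hfT hf0 hfJ using hex
    let G : ι →₀ MvPolynomial (Fin d) K :=
      Finsupp.onFinset F.support f fun b hb => Finsupp.mem_support_iff.2 (hf0 b hb)
    have hGm : VWL.Phi θ e G ∈ 𝒜 (i * r) := VWL.Phi_mem 𝒜 θ hθ1 e deg he G hfT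
    refine ⟨VWL.Phi θ e G, hGm, ?_⟩
    refine VWL.comp_of_span 𝒜 θ hθ1 r hr (i+1) (sub_mem hy ?_) ?_
    · have := SetLike.GradedMul.mul_mem (hell r) hGm
      rwa [show r + i * r = (i + 1) * r by ring] at this
    · rw [← VWL.Phi_smul, ← VWL.Phi_sub]
      exact VWL.Phi_J θ e r _ hfJ
  · left
    intro x hx hwx
    obtain ⟨F, hF, rfl⟩ := hG _ x hx
    refine VWL.comp_of_span 𝒜 θ hθ1 r hr i hx (VWL.Phi_J θ e r _ fun b => ?_)
    have hmul : 2 * (i * r) + 2 * r ≤ d * r := by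
      obtain ⟨d', rfl⟩ := hdeven
      calc 2 * (i * r) + 2 * r = (2 * i + 2) * r := by ring
        _ ≤ (d' + d') * r := Nat.mul_le_mul_right _ (by omega)
    have hex : ∃ G : ι →₀ MvPolynomial (Fin d) K, (∀ b, G b ∈ VWL.J K d r) ∧
        VWL.Phi θ e G = MvPolynomial.aeval θ (VWL.ell K d ^ r) * VWL.Phi θ e F := by
      refine Submodule.iSup_induction (fun j : Fin d =>
        Submodule.map (LinearMap.mulLeft K (θ j ^ r)) (𝒜 (i * r)))
        (motive := fun z => ∃ G : ι →₀ MvPolynomial (Fin d) K, (∀ b, G b ∈ VWL.J K d r) ∧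
          VWL.Phi θ e G = z) hwx ?_ ?_ ?_
      · rintro j _ ⟨y, hy, rfl⟩
        obtain ⟨G, _, rfl⟩ := hG _ y hy
        refine ⟨(MvPolynomial.X j ^ r : MvPolynomial (Fin d) K) • G, fun b => ?_, ?_⟩
        · exact Ideal.mul_mem_right _ _ (VWL.pow_mem_J r j)
        · rw [VWL.Phi_smul]; simp
      · exact ⟨0, fun b => zero_mem _, VWL.Phi_zero θ e⟩
      · rintro _ _ ⟨G, hG, rfl⟩ ⟨G', hG', rfl⟩
        exact ⟨G + G', fun b => add_mem (hG b) (hG' b), VWL.Phi_add θ e G G'⟩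
    obtain ⟨G, hGJ, hGe⟩ := hex
    rw [← VWL.Phi_smul, ← sub_eq_zero, ← VWL.Phi_sub] at hGe
    have h0 := sub_eq_zero.1 (hinj _ hGe)
    have hb : VWL.ell K d ^ r * F b ∈ VWL.J K d r := by
      have := hGJ b
      rwa [h0] at this
    rcases hF b with h1 | ⟨p, hp, h1⟩
    · rw [h1]; exact zero_mem _
    · exact VWL.lef_inj r hr p r (F b) h1 (by omega) hb
end
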